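/- arXiv:2101.12440 — 3 statements merged into one kernel-verified Lean document; each statement's English description precedes it below -/
import Mathlib

section
/- For n ≥ 2 and r ≥ 3n+2, with J_{nr} the ideal of k[x_1,x_2,x_3,x_4] generated by the binomials f_1, f_{2,i} (1≤i≤n), f_{3,j}, f_{4,j} (0≤j≤n−1), f_5, f_6, f_7 of the Backelin curve, the quotient k[x_1,x_2,x_3,x_4]/(J_{nr} + (x_3)) is a finite-dimensional k-vector space of dimension 3nr + 3n + 2r + 4. -/
open MvPolynomial

namespace Backelin

/-- The monomial with given exponents. -/
noncomputable def mono (k : Type*) [Field k] (a b c d : ℕ) : MvPolynomial (Fin 4) k :=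
  X 0 ^ a * X 1 ^ b * X 2 ^ c * X 3 ^ d

/-- The exponent vector. -/
noncomputable def ex (a b c d : ℕ) : Fin 4 →₀ ℕ :=
  Finsupp.equivFunOnFinite.symm ![a, b, c, d]

lemma mono_eq (k : Type*) [Field k] (a b c d : ℕ) :
    mono k a b c d = monomial (ex a b c d) 1 := by
  rw [monomial_eq]
  simp [mono, ex, Finsupp.prod_fintype, Fin.prod_univ_four]

lemma mono_dvd (k : Type*) [Field k] {a b c d a' b' c' d' : ℕ} (h1 : a' ≤ a) (h2 : b' ≤ b)
    (h3 : c' ≤ c) (h4 : d' ≤ d) : mono k a' b' c' d' ∣ mono k a b c d := by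
  unfold mono
  exact mul_dvd_mul (mul_dvd_mul (mul_dvd_mul (pow_dvd_pow _ h1) (pow_dvd_pow _ h2))
    (pow_dvd_pow _ h3)) (pow_dvd_pow _ h4)

lemma ex_eta (m : Fin 4 →₀ ℕ) : ex (m 0) (m 1) (m 2) (m 3) = m := by
  ext i
  fin_cases i <;> simp [ex]

/-- Number of admissible exponents of the first variable. -/
def cnt (n r d b : ℕ) : ℕ :=
  if d = 0 then (if b < n then r + 2 - b else if b < 2 * n + 1 then r + 3 - b else 0)
  else if d = 1 then (if b < n then r + 2 - b else 0)
  else if d = 2 then (if b < n then n else 0)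
  else if d < r + 2 then (if b + (d - 1) / 3 < n ∨ b = 0 then 1 else 0)
  else 0

/-- The nonstandard exponents. -/
def bad (n r : ℕ) : Set (Fin 4 →₀ ℕ) := {m | m 2 ≠ 0 ∨ cnt n r (m 3) (m 1) ≤ m 0}

lemma cnt_anti {n r d b d' b' : ℕ} (hn : 2 ≤ n) (hr : 3 * n + 2 ≤ r) (hd : d ≤ d') (hb : b ≤ b') :
    cnt n r d' b' ≤ cnt n r d b := by
  unfold cnt
  split_ifs <;> first | contradiction | omega | (simp only [or_false] at *; omega)

lemma bad_up {n r : ℕ} (hn : 2 ≤ n) (hr : 3 * n + 2 ≤ r) {s m : Fin 4 →₀ ℕ} (h : s ≤ m)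
    (hs : s ∈ bad n r) : m ∈ bad n r := by
  have h0 := h 0
  have h1 := h 1
  have h2 := h 2
  have h3 := h 3
  have := cnt_anti (n := n) (r := r) hn hr h3 h1
  simp only [bad, Set.mem_ofPred_eq] at *
  omega

/-- The monomial ideal. -/
noncomputable def I (k : Type*) [Field k] (n r : ℕ) : Ideal (MvPolynomial (Fin 4) k) :=
  Ideal.span ((fun s => monomial s (1 : k)) '' bad n r)

lemma mem_I (k : Type*) [Field k] {n r : ℕ} (hn : 2 ≤ n) (hr : 3 * n + 2 ≤ r)
    (p : MvPolynomial (Fin 4) k) : p ∈ I k n r ↔ ∀ m ∈ p.support, m ∈ bad n r := by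
  rw [I, mem_ideal_span_monomial_image]
  constructor
  · intro h m hm
    obtain ⟨s, hs, hsm⟩ := h m hm
    exact bad_up hn hr hsm hs
  · intro h m hm
    exact ⟨m, h m hm, le_rfl⟩

lemma mono_mem_I (k : Type*) [Field k] {n r a b c d : ℕ} (h : c ≠ 0 ∨ cnt n r d b ≤ a) :
    mono k a b c d ∈ I k n r := by
  rw [mono_eq]
  apply Ideal.subset_span
  refine ⟨_, ?_, rfl⟩
  simpa [bad, ex] using h

/-- The finite set of standard exponents. -/
def std (n r : ℕ) : Finset (Σ _ : ℕ, Σ _ : ℕ, ℕ) :=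
  (Finset.range (r + 2)).sigma fun d =>
    (Finset.range (2 * n + 1)).sigma fun b => Finset.range (cnt n r d b)

lemma mem_std {n r d b a : ℕ} (hn : 2 ≤ n) (hr : 3 * n + 2 ≤ r) :
    (⟨d, b, a⟩ : Σ _ : ℕ, Σ _ : ℕ, ℕ) ∈ std n r ↔ a < cnt n r d b := by
  simp only [std, Finset.mem_sigma, Finset.mem_range]
  refine ⟨fun h => h.2.2, fun h => ⟨?_, ?_, h⟩⟩ <;>
  · unfold cnt at h
    split_ifs at h <;> omega

lemma sum_cnt_zero {n r : ℕ} (hr : 3 * n + 2 ≤ r) :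
    (∑ b ∈ Finset.range (2 * n + 1), (cnt n r 0 b : ℤ)) =
      (2 * n + 1) * (r + 2) + (n + 1) - n * (2 * n + 1) := by
  have h : ∀ m, m ≤ n → (∑ b ∈ Finset.range m, (cnt n r 0 b : ℤ)) * 2 =
      2 * m * (r + 2) - m * (m - 1) := by
    intro m
    induction m with
    | zero => simp
    | succ m ih =>
      intro hm
      have hc : (cnt n r 0 m : ℤ) = r + 2 - m := by
        unfold cnt; split_ifs <;> first | contradiction | omega | (simp only [or_false] at *; omega)
      rw [Finset.sum_range_succ, add_mul, ih (by omega), hc]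
      push_cast; ring
  have h' : ∀ m, m ≤ n + 1 → (∑ b ∈ Finset.range (n + m), (cnt n r 0 b : ℤ)) * 2 =
      2 * n * (r + 2) - n * (n - 1) + 2 * m * (r + 3 - n) - m * (m - 1) := by
    intro m
    induction m with
    | zero => simpa using h n le_rfl
    | succ m ih =>
      intro hm
      have hc : (cnt n r 0 (n + m) : ℤ) = r + 3 - n - m := by
        unfold cnt; split_ifs <;> first | contradiction | omega | (simp only [or_false] at *; omega)
      rw [← add_assoc, Finset.sum_range_succ, add_mul, ih (by omega), hc]
      push_cast; ring
  have := h' (n + 1) le_rfl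
  rw [show n + (n + 1) = 2 * n + 1 by ring] at this
  push_cast at this
  linarith

lemma sum_cut {f : ℕ → ℕ} {N m : ℕ} (hm : m ≤ N) (h : ∀ b, m ≤ b → f b = 0) :
    (∑ b ∈ Finset.range N, (f b : ℤ)) = ∑ b ∈ Finset.range m, (f b : ℤ) := by
  symm
  apply Finset.sum_subset
  · intro x; simp only [Finset.mem_range]; omega
  · intro x _ hx
    rw [h x (by simpa using hx)]; rfl

lemma sum_cnt_one {n r : ℕ} (hr : 3 * n + 2 ≤ r) :
    (∑ b ∈ Finset.range (2 * n + 1), (cnt n r 1 b : ℤ)) * 2 =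
      2 * n * (r + 2) - n * (n - 1) := by
  rw [sum_cut (m := n) (by omega) (by intro b hb; unfold cnt; split_ifs <;> first | contradiction | omega | (simp only [or_false] at *; omega))]
  have h : ∀ m, m ≤ n → (∑ b ∈ Finset.range m, (cnt n r 1 b : ℤ)) * 2 =
      2 * m * (r + 2) - m * (m - 1) := by
    intro m
    induction m with
    | zero => simp
    | succ m ih =>
      intro hm
      have hc : (cnt n r 1 m : ℤ) = r + 2 - m := by
        unfold cnt; split_ifs <;> first | contradiction | omega | (simp only [or_false] at *; omega)
      rw [Finset.sum_range_succ, add_mul, ih (by omega), hc]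
      push_cast; ring
  exact h n le_rfl

lemma sum_cnt_const {n r d m v : ℕ} (hm : m ≤ 2 * n + 1)
    (h : ∀ b, cnt n r d b = if b < m then v else 0) :
    (∑ b ∈ Finset.range (2 * n + 1), (cnt n r d b : ℤ)) = m * v := by
  rw [sum_cut hm (by intro b hb; rw [h, if_neg (by omega)])]
  rw [Finset.sum_congr rfl (g := fun _ => (v : ℤ))]
  · simp
  · intro b hb
    rw [h, if_pos (by simpa using hb)]

lemma sum_cnt_two {n r : ℕ} :
    (∑ b ∈ Finset.range (2 * n + 1), (cnt n r 2 b : ℤ)) = n * n :=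
  sum_cnt_const (by omega) (by intro b; simp [cnt])

lemma sum_cnt_mid {n r m e : ℕ} (hr : 3 * n + 2 ≤ r) (hm : m < n) (he : e < 3)
    (h3 : 3 ≤ 3 * m + 1 + e) :
    (∑ b ∈ Finset.range (2 * n + 1), (cnt n r (3 * m + 1 + e) b : ℤ)) = n - m := by
  rw [sum_cnt_const (m := n - m) (v := 1) (by omega)
    (by intro b; unfold cnt; split_ifs <;> first | contradiction | omega | (simp only [or_false] at *; omega))]
  push_cast [hm.le]; ring

lemma sum_cnt_big {n r d : ℕ} (hn : 2 ≤ n) (hd : 3 * n + 1 ≤ d) (hd' : d < r + 2) :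
    (∑ b ∈ Finset.range (2 * n + 1), (cnt n r d b : ℤ)) = 1 := by
  rw [sum_cnt_const (m := 1) (v := 1) (by omega)
    (by intro b; unfold cnt; split_ifs <;> first | contradiction | omega | (simp only [or_false] at *; omega))]
  simp

lemma card_std {n r : ℕ} (hn : 2 ≤ n) (hr : 3 * n + 2 ≤ r) :
    (std n r).card = 3 * n * r + 3 * n + 2 * r + 4 := by
  have key : ∀ m, m + 1 ≤ n → (∑ d ∈ Finset.range (3 * m + 4),
      ∑ b ∈ Finset.range (2 * n + 1), (cnt n r d b : ℤ)) * 2 =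
      2 * ((2 * n + 1) * (r + 2) + (n + 1) - n * (2 * n + 1)) + (2 * n * (r + 2) - n * (n - 1))
        + 2 * (n * n) + 2 * n + 6 * m * n - 3 * m * (m + 1) := by
    intro m
    induction m with
    | zero =>
      intro hm
      have h3 := sum_cnt_mid (m := 0) (e := 2) hr (by omega) (by omega) (by omega)
      have h1 := sum_cnt_one hr
      simp only [mul_zero, zero_add] at h3 ⊢
      norm_num at h3 ⊢
      simp only [Finset.sum_range_succ _ 3, Finset.sum_range_succ _ 2,
        Finset.sum_range_succ _ 1, Finset.sum_range_succ _ 0, Finset.sum_range_zero]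
      rw [h3, sum_cnt_zero hr, sum_cnt_two]
      linarith
    | succ m ih =>
      intro hm
      have e0 := sum_cnt_mid (m := m + 1) (e := 0) hr (by omega) (by omega) (by omega)
      have e1 := sum_cnt_mid (m := m + 1) (e := 1) hr (by omega) (by omega) (by omega)
      have e2 := sum_cnt_mid (m := m + 1) (e := 2) hr (by omega) (by omega) (by omega)
      rw [show 3 * (m + 1) + 4 = 3 * m + 4 + 1 + 1 + 1 by ring, Finset.sum_range_succ,
        Finset.sum_range_succ, Finset.sum_range_succ]
      rw [show 3 * (m + 1) + 1 + 0 = 3 * m + 4 by ring] at e0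
      rw [show 3 * (m + 1) + 1 + 1 = 3 * m + 4 + 1 by ring] at e1
      rw [show 3 * (m + 1) + 1 + 2 = 3 * m + 4 + 1 + 1 by ring] at e2
      have := ih (by omega)
      rw [e0, e1, e2]
      push_cast
      linarith
  have key2 : ∀ s, 3 * n + 1 + s ≤ r + 2 → (∑ d ∈ Finset.range (3 * n + 1 + s),
      ∑ b ∈ Finset.range (2 * n + 1), (cnt n r d b : ℤ)) * 2 =
      2 * ((2 * n + 1) * (r + 2) + (n + 1) - n * (2 * n + 1)) + (2 * n * (r + 2) - n * (n - 1))
        + 2 * (n * n) + 2 * n + 6 * (n - 1) * n - 3 * (n - 1) * n + 2 * s := by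
    intro s
    induction s with
    | zero =>
      intro _
      have := key (n - 1) (by omega)
      rw [show 3 * (n - 1) + 4 = 3 * n + 1 + 0 by omega] at this
      rw [this]
      push_cast [show 1 ≤ n by omega]
      ring
    | succ s ih =>
      intro hs
      rw [← add_assoc, Finset.sum_range_succ, sum_cnt_big hn (by omega) (by omega), add_mul,
        ih (by omega)]
      push_cast; ring
  have := key2 (r + 1 - 3 * n) (by omega)
  rw [show 3 * n + 1 + (r + 1 - 3 * n) = r + 2 by omega] at this
  zify
  simp only [std, Finset.card_sigma, Finset.card_range]
  push_cast [show 3 * n ≤ r + 1 by omega] at this ⊢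
  linarith

/-- Coefficients at the standard exponents. -/
noncomputable def phi (k : Type*) [Field k] (n r : ℕ) :
    MvPolynomial (Fin 4) k →ₗ[k] (std n r → k) :=
  LinearMap.pi fun t => lcoeff k (ex t.1.2.2 t.1.2.1 0 t.1.1)

lemma ex_inj {a b c d a' b' c' d' : ℕ} :
    ex a b c d = ex a' b' c' d' ↔ a = a' ∧ b = b' ∧ c = c' ∧ d = d' := by
  simp [ex]

lemma phi_surj (k : Type*) [Field k] (n r : ℕ) : Function.Surjective (phi k n r) := by
  classical
  intro f
  refine ⟨∑ t : std n r, monomial (ex t.1.2.2 t.1.2.1 0 t.1.1) (f t), ?_⟩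
  ext s
  simp only [phi, LinearMap.pi_apply, lcoeff_apply, coeff_sum, coeff_monomial]
  rw [Finset.sum_eq_single s]
  · simp
  · rintro ⟨⟨d, b, a⟩, ht⟩ _ hne
    obtain ⟨⟨d', b', a'⟩, hs⟩ := s
    rw [if_neg]
    rw [ex_inj]
    rintro ⟨rfl, rfl, -, rfl⟩
    exact hne rfl
  · simp

lemma phi_ker (k : Type*) [Field k] {n r : ℕ} (hn : 2 ≤ n) (hr : 3 * n + 2 ≤ r) :
    LinearMap.ker (phi k n r) = (I k n r).restrictScalars k := by
  ext p
  rw [LinearMap.mem_ker, Submodule.restrictScalars_mem, mem_I k hn hr]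
  constructor
  · intro h m hm
    by_contra hb
    simp only [bad, Set.mem_ofPred_eq, not_or, not_not, not_le] at hb
    have := congrFun h ⟨⟨m 3, m 1, m 0⟩, (mem_std hn hr).2 hb.2⟩
    simp only [phi, LinearMap.pi_apply, lcoeff_apply, Pi.zero_apply] at this
    have he := ex_eta m
    rw [hb.1] at he
    rw [he] at this
    exact (mem_support_iff.1 hm) this
  · intro h
    ext ⟨⟨d, b, a⟩, ht⟩
    rw [mem_std hn hr] at ht
    simp only [phi, LinearMap.pi_apply, lcoeff_apply, Pi.zero_apply]
    by_contra hc
    have := h _ (mem_support_iff.2 hc)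
    simp [bad, ex] at this
    omega

lemma quot_I (k : Type*) [Field k] {n r : ℕ} (hn : 2 ≤ n) (hr : 3 * n + 2 ≤ r) :
    Module.Finite k (MvPolynomial (Fin 4) k ⧸ I k n r) ∧
      Module.finrank k (MvPolynomial (Fin 4) k ⧸ I k n r) =
        3 * n * r + 3 * n + 2 * r + 4 := by
  have e1 : (MvPolynomial (Fin 4) k ⧸ I k n r) ≃ₗ[k] (std n r → k) :=
    (Submodule.Quotient.restrictScalarsEquiv k (I k n r)).symm ≪≫ₗ
    (Submodule.quotEquivOfEq _ _ (phi_ker k hn hr).symm) ≪≫ₗ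
    (phi k n r).quotKerEquivOfSurjective (phi_surj k n r)
  refine ⟨Module.Finite.equiv e1.symm, ?_⟩
  rw [e1.finrank_eq, Module.finrank_fintype_fun_eq_card, Fintype.card_coe, card_std hn hr]

lemma I_le (k : Type*) [Field k] {n r : ℕ} (hn : 2 ≤ n) (hr : 3 * n + 2 ≤ r)
    (K : Ideal (MvPolynomial (Fin 4) k))
    (h0 : mono k 0 0 1 0 ∈ K) (h1 : mono k 1 0 0 3 ∈ K)
    (h2 : ∀ i, 1 ≤ i → i ≤ n → mono k 0 (n - i + 1) 0 (3 * i - 2) ∈ K)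
    (h3 : ∀ j, j ≤ n - 1 → mono k (r - n + 3 + j) (n - 1 - j) 0 0 ∈ K)
    (h4 : ∀ j, j ≤ n - 1 → mono k (r - 2 * n + 3 + j) (2 * n - j) 0 0 ∈ K)
    (h5 : mono k 0 0 0 (r + 2) ∈ K) (h6 : mono k n 0 0 2 ∈ K)
    (h7 : mono k 0 (2 * n + 1) 0 0 ∈ K) : I k n r ≤ K := by
  rw [I, Ideal.span_le]
  rintro _ ⟨m, hm, rfl⟩
  simp only [bad, Set.mem_ofPred_eq] at hm
  have hmm := ex_eta m
  show monomial m 1 ∈ K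
  rw [← hmm, ← mono_eq]
  generalize m 0 = a at *
  generalize m 1 = b at *
  generalize m 2 = c at *
  generalize m 3 = d at *
  clear hmm
  have go : ∀ {a' b' c' d'}, mono k a' b' c' d' ∈ K → a' ≤ a → b' ≤ b → c' ≤ c → d' ≤ d →
      mono k a b c d ∈ K := fun h x y z w => K.mem_of_dvd (mono_dvd k x y z w) h
  rcases Nat.eq_zero_or_pos c with hc | hc
  swap
  · exact go h0 (by omega) (by omega) (by omega) (by omega)
  replace hm : cnt n r d b ≤ a := by omega
  by_cases hd : r + 2 ≤ d
  · exact go h5 (by omega) (by omega) (by omega) (by omega)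
  by_cases hb : 2 * n + 1 ≤ b
  · exact go h7 (by omega) (by omega) (by omega) (by omega)
  by_cases g1 : 1 ≤ d ∧ n ≤ b
  · exact go (h2 1 (by omega) (by omega)) (by omega) (by omega) (by omega) (by omega)
  by_cases g2 : 3 ≤ d ∧ 1 ≤ a
  · exact go h1 (by omega) (by omega) (by omega) (by omega)
  by_cases g3 : 2 ≤ d ∧ n ≤ a
  · exact go h6 (by omega) (by omega) (by omega) (by omega)
  by_cases g4 : b < n ∧ r + 2 ≤ a + b
  · exact go (h3 (n - 1 - b) (by omega)) (by omega) (by omega) (by omega) (by omega)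
  by_cases g5 : n = b ∧ r + 3 ≤ a + b
  · exact go (h3 0 (by omega)) (by omega) (by omega) (by omega) (by omega)
  by_cases g6 : n < b ∧ r + 3 ≤ a + b
  · exact go (h4 (2 * n - b) (by omega)) (by omega) (by omega) (by omega) (by omega)
  by_cases g7 : 3 ≤ d ∧ 1 ≤ b ∧ n ≤ b + (d - 1) / 3
  · by_cases g8 : (d - 1) / 3 + 1 ≤ n
    · exact go (h2 ((d - 1) / 3 + 1) (by omega) (by omega)) (by omega) (by omega) (by omega)
        (by omega)
    · exact go (h2 n (by omega) (by omega)) (by omega) (by omega) (by omega)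
        (by omega)
  exfalso
  unfold cnt at hm
  split_ifs at hm <;> omega

end Backelin

open Backelin in
/-- For the ideal `J_{nr}` generated by the Backelin binomials, the quotient
`k[x₁,…,x₄]/(J_{nr} + (x₃))` is a `k`-vector space of dimension
`3nr + 3n + 2r + 4`. -/
theorem backelin_quotient_dimension
    (k : Type*) [Field k] (n r : ℕ) (hn : 2 ≤ n) (hr : 3 * n + 2 ≤ r) :
    letI x₁ : MvPolynomial (Fin 4) k := X 0
    letI x₂ : MvPolynomial (Fin 4) k := X 1
    letI x₃ : MvPolynomial (Fin 4) k := X 2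
    letI x₄ : MvPolynomial (Fin 4) k := X 3
    letI S : Set (MvPolynomial (Fin 4) k) :=
      {g | g = x₂ * x₃ ^ 3 - x₁ * x₄ ^ 3 ∨
        (∃ i, 1 ≤ i ∧ i ≤ n ∧
          g = x₁ ^ (n - i) * x₃ ^ (3 * i - 1) - x₂ ^ (n - i + 1) * x₄ ^ (3 * i - 2)) ∨
        (∃ j, j ≤ n - 1 ∧
          g = x₁ ^ (r - n + 3 + j) * x₂ ^ (n - 1 - j) - x₃ ^ (2 + 3 * j) * x₄ ^ (r - 1 - 3 * j)) ∨
        (∃ j, j ≤ n - 1 ∧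
          g = x₁ ^ (r - 2 * n + 3 + j) * x₂ ^ (2 * n - j) - x₃ ^ (3 * j + 1) * x₄ ^ (r + 1 - 3 * j)) ∨
        g = x₁ ^ (r - n + 2) * x₂ ^ n * x₃ - x₄ ^ (r + 2) ∨
        g = x₂ ^ (n + 1) * x₃ - x₁ ^ n * x₄ ^ 2 ∨
        g = x₂ ^ (2 * n + 1) - x₁ ^ (2 * n - 1) * x₃ * x₄}
    letI J : Ideal (MvPolynomial (Fin 4) k) := Ideal.span S
    Module.Finite k (MvPolynomial (Fin 4) k ⧸ (J ⊔ Ideal.span {x₃})) ∧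
      Module.finrank k (MvPolynomial (Fin 4) k ⧸ (J ⊔ Ideal.span {x₃})) =
        3 * n * r + 3 * n + 2 * r + 4 := by
  have hI : ∀ J : Ideal (MvPolynomial (Fin 4) k), J = I k n r →
      Module.Finite k (MvPolynomial (Fin 4) k ⧸ J) ∧
      Module.finrank k (MvPolynomial (Fin 4) k ⧸ J) =
        3 * n * r + 3 * n + 2 * r + 4 := by
    rintro _ rfl
    exact quot_I k hn hr
  apply hI
  apply le_antisymm
  · rw [sup_le_iff, Ideal.span_le, Ideal.span_le]
    have go : ∀ {p q : MvPolynomial (Fin 4) k} (a b c d a' b' c' d' : ℕ),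
        p = mono k a b c d → q = mono k a' b' c' d' →
        (c ≠ 0 ∨ cnt n r d b ≤ a) → (c' ≠ 0 ∨ cnt n r d' b' ≤ a') → p - q ∈ I k n r := by
      rintro _ _ a b c d a' b' c' d' rfl rfl h h'
      exact sub_mem (mono_mem_I k h) (mono_mem_I k h')
    constructor
    · rintro g (rfl | ⟨i, hi, hi', rfl⟩ | ⟨j, hj, rfl⟩ | ⟨j, hj, rfl⟩ | rfl | rfl | rfl)
      · refine go 0 1 3 0 1 0 0 3 (by simp [mono]) (by simp [mono]) (by simp) (Or.inr ?_)
        unfold cnt; split_ifs <;> first | contradiction | omega | (simp only [or_false] at *; omega)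
      · refine go (n - i) 0 (3 * i - 1) 0 0 (n - i + 1) 0 (3 * i - 2) (by simp [mono])
          (by simp [mono]) (Or.inl (by omega)) (Or.inr ?_)
        unfold cnt; split_ifs <;> first | contradiction | omega | (simp only [or_false] at *; omega)
      · refine go (r - n + 3 + j) (n - 1 - j) 0 0 0 0 (2 + 3 * j) (r - 1 - 3 * j) (by simp [mono])
          (by simp [mono]) (Or.inr ?_) (Or.inl (by omega))
        unfold cnt; split_ifs <;> first | contradiction | omega | (simp only [or_false] at *; omega)
      · refine go (r - 2 * n + 3 + j) (2 * n - j) 0 0 0 0 (3 * j + 1) (r + 1 - 3 * j)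
          (by simp [mono]) (by simp [mono]) (Or.inr ?_) (Or.inl (by omega))
        unfold cnt; split_ifs <;> first | contradiction | omega | (simp only [or_false] at *; omega)
      · refine go (r - n + 2) n 1 0 0 0 0 (r + 2) (by simp [mono]) (by simp [mono])
          (by simp) (Or.inr ?_)
        unfold cnt; split_ifs <;> first | contradiction | omega | (simp only [or_false] at *; omega)
      · refine go 0 (n + 1) 1 0 n 0 0 2 (by simp [mono]) (by simp [mono])
          (by simp) (Or.inr ?_)
        unfold cnt; split_ifs <;> first | contradiction | omega | (simp only [or_false] at *; omega)
      · refine go 0 (2 * n + 1) 0 0 (2 * n - 1) 0 1 1 (by simp [mono]) (by simp [mono])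
          (Or.inr ?_) (by simp)
        unfold cnt; split_ifs <;> first | contradiction | omega | (simp only [or_false] at *; omega)
    · rw [Set.singleton_subset_iff]
      have : mono k 0 0 1 0 ∈ I k n r := mono_mem_I k (by simp)
      simpa [mono] using this
  · generalize hS : Ideal.span _ ⊔ Ideal.span {(X 2 : MvPolynomial (Fin 4) k)} = K
    have h3K : (X 2 : MvPolynomial (Fin 4) k) ∈ K := by
      rw [← hS]
      exact Ideal.mem_sup_right (Ideal.subset_span rfl)
    have sub : ∀ g, g ∈ _ → g ∈ K := fun g hg => hS ▸ Ideal.mem_sup_left (Ideal.subset_span hg)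
    clear hS
    have pw : ∀ (y : MvPolynomial (Fin 4) k) c, c ≠ 0 → y * X 2 ^ c ∈ K := fun y c hc =>
      K.mul_mem_left _ (K.pow_mem_of_mem h3K c (Nat.pos_of_ne_zero hc))
    have left : ∀ {p q q' : MvPolynomial (Fin 4) k}, p - q ∈ K → q ∈ K → q' = p → q' ∈ K := by
      rintro p q _ h h' rfl
      simpa using K.add_mem h h'
    have right : ∀ {p q q' : MvPolynomial (Fin 4) k}, p - q ∈ K → p ∈ K → q' = q → q' ∈ K := by
      rintro p q _ h h' rfl
      simpa using K.sub_mem h' h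
    apply I_le k hn hr
    · simpa [mono] using h3K
    · exact right (sub _ (Or.inl rfl)) (pw _ _ (by omega)) (by simp [mono])
    · intro i hi hi'
      exact right (sub _ (Or.inr (Or.inl ⟨i, hi, hi', rfl⟩))) (pw _ _ (by omega)) (by simp [mono])
    · intro j hj
      refine left (sub _ (Or.inr (Or.inr (Or.inl ⟨j, hj, rfl⟩)))) ?_ (by simp [mono])
      rw [mul_comm]; exact pw _ _ (by omega)
    · intro j hj
      refine left (sub _ (Or.inr (Or.inr (Or.inr (Or.inl ⟨j, hj, rfl⟩))))) ?_ (by simp [mono])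
      rw [mul_comm]; exact pw _ _ (by omega)
    · refine right (sub _ (Or.inr (Or.inr (Or.inr (Or.inr (Or.inl rfl)))))) ?_ (by simp [mono])
      exact K.mul_mem_left _ h3K
    · refine right (sub _ (Or.inr (Or.inr (Or.inr (Or.inr (Or.inr (Or.inl rfl))))))) ?_
        (by simp [mono])
      exact K.mul_mem_left _ h3K
    · refine left (sub _ (Or.inr (Or.inr (Or.inr (Or.inr (Or.inr (Or.inr rfl))))))) ?_
        (by simp [mono])
      exact K.mul_mem_right _ (K.mul_mem_left _ h3K)
end

section
/- The projective closure of the Backelin curve C(s, s+3, s+3n+1, s+3n+2), for n ≥ 2, r ≥ 3n+2, s = r(3n+2)+3, is arithmetically Cohen–Macaulay, i.e., the homogenization of its defining toric ideal with respect to x_0 is a Cohen–Macaulay ideal in k[x_0,x_1,x_2,x_3,x_4]. -/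
set_option maxHeartbeats 1000000
set_option synthInstance.maxHeartbeats 400000

open MvPolynomial

namespace Backelin

/-- Rewriting step: a large weight admits a representation using the top generator. -/
lemma exists_top_rep (n r b c e : ℕ) (hn : 2 ≤ n) (hr : 3 * n + 2 ≤ r)
    (hw : (r + 1) * (3 * n + 2) ≤ 3 * b + (3 * n + 1) * c + (3 * n + 2) * e) :
    ∃ b' c' e', 3 * b' + (3 * n + 1) * c' + (3 * n + 2) * (e' + 1)
      = 3 * b + (3 * n + 1) * c + (3 * n + 2) * e ∧ b' + c' + e' + 1 ≤ b + c + e := by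
  rcases Nat.eq_zero_or_pos e with he | he
  swap
  · obtain ⟨e, rfl⟩ : ∃ e', e = e' + 1 := ⟨e - 1, by omega⟩
    exact ⟨b, c, e, rfl, by omega⟩
  subst he
  by_cases hb : 3 * n + 2 ≤ b
  · obtain ⟨b, rfl⟩ := Nat.exists_eq_add_of_le hb
    exact ⟨b, c, 2, by ring, by omega⟩
  by_cases hc : 3 * n + 2 ≤ c
  · obtain ⟨c, rfl⟩ := Nat.exists_eq_add_of_le hc
    exact ⟨b, c, 3 * n, by ring, by omega⟩
  by_cases h3 : 3 ≤ c ∧ 1 ≤ b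
  · obtain ⟨c, rfl⟩ := Nat.exists_eq_add_of_le h3.1
    obtain ⟨b, rfl⟩ := Nat.exists_eq_add_of_le h3.2
    exact ⟨b, c, 2, by ring, by omega⟩
  exfalso
  have h1 : (3 * n + 3) * (3 * n + 2) ≤ (r + 1) * (3 * n + 2) :=
    Nat.mul_le_mul_right _ (by omega)
  by_cases hc2 : c ≤ 2
  · have h2 : (3 * n + 1) * c ≤ (3 * n + 1) * 2 := Nat.mul_le_mul_left _ hc2
    nlinarith
  · have hb0 : b = 0 := by omega
    have h2 : (3 * n + 1) * c ≤ (3 * n + 1) * (3 * n + 1) :=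
      Nat.mul_le_mul_left _ (by omega)
    nlinarith

/-- First exponent (of `s`) of the image of a monomial. -/
def U0 (a0 a1 a2 A : ℕ) (d : Fin 5 →₀ ℕ) : ℕ :=
  A * d 0 + (A - a0) * d 1 + (A - a1) * d 2 + (A - a2) * d 3

/-- Second exponent (of `t`) of the image of a monomial. -/
def U1 (a0 a1 a2 A : ℕ) (d : Fin 5 →₀ ℕ) : ℕ :=
  a0 * d 1 + a1 * d 2 + a2 * d 3 + A * d 4

lemma combinatorial (n r : ℕ) (hn : 2 ≤ n) (hr : 3 * n + 2 ≤ r) (a0 a1 a2 A : ℕ)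
    (h0 : a0 = r * (3 * n + 2) + 3) (h1 : a1 = r * (3 * n + 2) + 3 + 3)
    (h2 : a2 = r * (3 * n + 2) + 3 + 3 * n + 1) (hA : A = r * (3 * n + 2) + 3 + 3 * n + 2)
    (d e : Fin 5 →₀ ℕ) (hd0 : U0 a0 a1 a2 A d = U0 a0 a1 a2 A e + A)
    (hd1 : U1 a0 a1 a2 A d + A = U1 a0 a1 a2 A e) :
    ∃ f : Fin 5 →₀ ℕ, U0 a0 a1 a2 A d = U0 a0 a1 a2 A f + A ∧
      U1 a0 a1 a2 A d = U1 a0 a1 a2 A f := by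
  have e0 : A - a0 = 3 * n + 2 := by omega
  have e1 : A - a1 = 3 * n - 1 := by omega
  have e2 : A - a2 = 1 := by omega
  obtain ⟨m, rfl⟩ : ∃ m, n = m + 1 := ⟨n - 1, by omega⟩
  have e1' : A - a1 = 3 * m + 2 := by omega
  obtain ⟨s, hs⟩ : ∃ s, s = r * (3 * (m + 1) + 2) + 3 := ⟨_, rfl⟩
  rw [← hs] at h0 h1 h2 hA
  simp only [U0, U1, e0, e1', e2] at *
  clear e0 e1 e2 e1'
  subst h1 h2 hA
  subst a0
  generalize d 0 = d0 at *
  generalize d 1 = d1 at *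
  generalize d 2 = d2 at *
  generalize d 3 = d3 at *
  generalize d 4 = d4 at *
  generalize e 0 = x0 at *
  generalize e 1 = x1 at *
  generalize e 2 = x2 at *
  generalize e 3 = x3 at *
  generalize e 4 = x4 at *
  suffices H : ∃ f0 f1 f2 f3 f4 : ℕ,
      f0 + f1 + f2 + f3 + f4 + 1 = d0 + d1 + d2 + d3 + d4 ∧
      s * d1 + (s + 3) * d2 + (s + 3 * (m + 1) + 1) * d3 + (s + 3 * (m + 1) + 2) * d4 =
      s * f1 + (s + 3) * f2 + (s + 3 * (m + 1) + 1) * f3 + (s + 3 * (m + 1) + 2) * f4 by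
    obtain ⟨f0, f1, f2, f3, f4, hf, hf1⟩ := H
    refine ⟨Finsupp.equivFunOnFinite.symm ![f0, f1, f2, f3, f4], ?_⟩
    simp only [Finsupp.equivFunOnFinite_symm_apply_apply, Matrix.cons_val]
    refine ⟨?_, hf1⟩
    have := congrArg (fun z => (s + 3 * (m + 1) + 2) * z) hf
    linarith
  rcases Nat.eq_zero_or_pos d0 with hz | hz
  swap
  · exact ⟨d0 - 1, d1, d2, d3, d4, by omega, rfl⟩
  subst hz
  -- total degrees agree
  have hdeg : d1 + d2 + d3 + d4 = x0 + x1 + x2 + x3 + x4 := by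
    have : (s + 3 * (m + 1) + 2) * (d1 + d2 + d3 + d4)
        = (s + 3 * (m + 1) + 2) * (x0 + x1 + x2 + x3 + x4) := by linarith
    exact Nat.eq_of_mul_eq_mul_left (by omega) this
  have hw : (r + 1) * (3 * (m + 1) + 2)
      ≤ 3 * x2 + (3 * (m + 1) + 1) * x3 + (3 * (m + 1) + 2) * x4 := by
    have h5 : s * (x1 + x2 + x3 + x4) ≤ s * (d1 + d2 + d3 + d4) :=
      Nat.mul_le_mul_left _ (by omega)
    have h6 : 0 ≤ m * d3 := Nat.zero_le _
    have h7 : 0 ≤ m * d4 := Nat.zero_le _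
    nlinarith
  obtain ⟨b, c, e, hbce, hle⟩ := exists_top_rep (m + 1) r x2 x3 x4 hn hr hw
  obtain ⟨q, hq⟩ := Nat.exists_eq_add_of_le hle
  refine ⟨x0, x1 + q, b, c, e, by omega, ?_⟩
  have := congrArg (fun z => s * z) hq
  linarith

variable {k : Type*} [Field k]

/-- The parametrization of the projective monomial curve. -/
noncomputable abbrev par (k : Type*) [Field k] (a0 a1 a2 A : ℕ) :
    MvPolynomial (Fin 5) k →ₐ[k] MvPolynomial (Fin 2) k :=
  aeval (R := k) ![(X 0 : MvPolynomial (Fin 2) k) ^ A, X 0 ^ (A - a0) * X 1 ^ a0,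
    X 0 ^ (A - a1) * X 1 ^ a1, X 0 ^ (A - a2) * X 1 ^ a2, X 1 ^ A]

lemma monomial_two (u : Fin 2 →₀ ℕ) (c : k) :
    monomial u c = C c * (X 0 ^ u 0 * X 1 ^ u 1) := by
  rw [monomial_eq, Finsupp.prod_fintype _ _ (by simp), Fin.prod_univ_two]

lemma par_monomial (a0 a1 a2 A : ℕ) (d : Fin 5 →₀ ℕ) (c : k) :
    par k a0 a1 a2 A (monomial d c)
      = C c * (X 0 ^ U0 a0 a1 a2 A d * X 1 ^ U1 a0 a1 a2 A d) := by
  rw [aeval_monomial, Finsupp.prod_fintype _ _ (by simp), Fin.prod_univ_five]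
  simp only [Matrix.cons_val, algebraMap_eq, U0, U1]
  ring

lemma par_support (a0 a1 a2 A : ℕ) (p : MvPolynomial (Fin 5) k) (u : Fin 2 →₀ ℕ)
    (hu : coeff u (par k a0 a1 a2 A p) ≠ 0) :
    ∃ d : Fin 5 →₀ ℕ, u 0 = U0 a0 a1 a2 A d ∧ u 1 = U1 a0 a1 a2 A d := by
  induction p using MvPolynomial.induction_on' with
  | monomial d c =>
    have h : par k a0 a1 a2 A (monomial d c) = monomial
        (Finsupp.equivFunOnFinite.symm ![U0 a0 a1 a2 A d, U1 a0 a1 a2 A d]) c := by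
      rw [par_monomial, monomial_two]
      simp
    rw [h, coeff_monomial] at hu
    split_ifs at hu with h1
    · exact ⟨d, by simp [← h1], by simp [← h1]⟩
    · exact absurd rfl hu
  | add p q hp hq =>
    rw [map_add, coeff_add] at hu
    by_cases h : coeff u (par k a0 a1 a2 A p) = 0
    · rw [h, zero_add] at hu
      exact hq hu
    · exact hp h

lemma key (a0 a1 a2 A : ℕ)
    (hcomb : ∀ d e : Fin 5 →₀ ℕ, U0 a0 a1 a2 A d = U0 a0 a1 a2 A e + A →
      U1 a0 a1 a2 A d + A = U1 a0 a1 a2 A e →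
      ∃ f : Fin 5 →₀ ℕ, U0 a0 a1 a2 A d = U0 a0 a1 a2 A f + A ∧
        U1 a0 a1 a2 A d = U1 a0 a1 a2 A f)
    (f g : MvPolynomial (Fin 5) k)
    (h : X 1 ^ A * par k a0 a1 a2 A f = X 0 ^ A * par k a0 a1 a2 A g) :
    ∃ q, par k a0 a1 a2 A f = X 0 ^ A * par k a0 a1 a2 A q := by
  have H : ∀ u : Fin 2 →₀ ℕ, ∃ q, monomial u (coeff u (par k a0 a1 a2 A f))
      = X 0 ^ A * par k a0 a1 a2 A q := by
    intro u
    by_cases hu : coeff u (par k a0 a1 a2 A f) = 0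
    · exact ⟨0, by rw [hu, map_zero, map_zero, mul_zero]⟩
    obtain ⟨d, hd0, hd1⟩ := par_support a0 a1 a2 A f u hu
    have h1 : coeff (Finsupp.single 1 A + u) (X 1 ^ A * par k a0 a1 a2 A f)
        = coeff u (par k a0 a1 a2 A f) := by
      rw [X_pow_eq_monomial, coeff_monomial_mul, one_mul]
    rw [h, X_pow_eq_monomial, coeff_monomial_mul'] at h1
    split_ifs at h1 with hle
    swap
    · exact absurd h1.symm hu
    rw [one_mul] at h1
    obtain ⟨e, he0, he1⟩ := par_support a0 a1 a2 A g _ (h1 ▸ hu)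
    have hA := hle 0
    simp at he0 he1 hA
    obtain ⟨p, hp0, hp1⟩ := hcomb d e (by omega) (by omega)
    refine ⟨monomial p (coeff u (par k a0 a1 a2 A f)), ?_⟩
    rw [par_monomial, monomial_two, hd0, hd1, hp0, hp1]
    ring
  choose q hq using H
  refine ⟨∑ u ∈ (par k a0 a1 a2 A f).support, q u, ?_⟩
  rw [map_sum, Finset.mul_sum]
  conv_lhs => rw [MvPolynomial.as_sum (par k a0 a1 a2 A f)]
  exact Finset.sum_congr rfl fun u _ => hq u

lemma par_integral (a0 a1 a2 A : ℕ) (hA : 0 < A) :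
    (par k a0 a1 a2 A).toRingHom.IsIntegral := by
  intro p
  have hX : ∀ i : Fin 2, (par k a0 a1 a2 A).toRingHom.IsIntegralElem (X i) := by
    intro i
    have : ∃ y, par k a0 a1 a2 A y = X i ^ A := by
      fin_cases i
      · exact ⟨X 0, by simp⟩
      · exact ⟨X 4, by simp⟩
    obtain ⟨y, hy⟩ := this
    refine ⟨Polynomial.X ^ A - Polynomial.C y, Polynomial.monic_X_pow_sub_C _ hA.ne', ?_⟩
    rw [Polynomial.eval₂_sub, Polynomial.eval₂_X_pow, Polynomial.eval₂_C]
    exact sub_eq_zero.2 hy.symm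
  induction p using MvPolynomial.induction_on with
  | C c =>
    have : (C c : MvPolynomial (Fin 2) k) = (par k a0 a1 a2 A).toRingHom (C c) := by simp
    rw [this]
    exact RingHom.isIntegralElem_map _
  | add p q hp hq => exact RingHom.IsIntegralElem.add _ hp hq
  | mul_X p i hp => exact RingHom.IsIntegralElem.mul _ hp (hX i)

lemma dim_eq {P R : Type*} [CommRing P] [CommRing R] [IsDomain R] (φ : P →+* R)
    (h : φ.IsIntegral) : ringKrullDim (P ⧸ RingHom.ker φ) = ringKrullDim R := by
  letI : Algebra (P ⧸ RingHom.ker φ) R := φ.kerLift.toAlgebra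
  have hint : Algebra.IsIntegral (P ⧸ RingHom.ker φ) R := by
    refine ⟨fun x => ?_⟩
    have : (φ.kerLift.comp (Ideal.Quotient.mk (RingHom.ker φ))).IsIntegral := h
    exact this.tower_top _ _ x
  have hinj : Function.Injective (algebraMap (P ⧸ RingHom.ker φ) R) := φ.kerLift_injective
  have : FaithfulSMul (P ⧸ RingHom.ker φ) R := (faithfulSMul_iff_algebraMap_injective _ _).2 hinj
  apply le_antisymm
  · refine iSup_le fun l => ?_
    obtain ⟨Q, -, hQ, hQl⟩ := Ideal.exists_ideal_over_prime_of_isIntegral (S := R)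
      l.head.asIdeal ⊥ (by
        rw [← RingHom.ker_eq_comap_bot, (RingHom.injective_iff_ker_eq_bot _).1 hinj]
        exact bot_le)
    haveI : Q.LiesOver l.head.asIdeal := ⟨hQl.symm⟩
    obtain ⟨L, hL, -⟩ := Ideal.exists_ltSeries_of_hasGoingUp l Q
    rw [← hL]
    exact le_iSup (fun L : LTSeries (PrimeSpectrum R) => (L.length : WithBot ℕ∞)) L
  · refine Order.krullDim_le_of_strictMono
      (PrimeSpectrum.comap (algebraMap (P ⧸ RingHom.ker φ) R)) fun I J hIJ => ?_
    exact Ideal.IsIntegral.comap_lt_comap hIJ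

lemma regular_of {P R K : Type*} [CommRing P] [CommRing R] [IsDomain R] [CommRing K] [Nontrivial K]
    (φ : P →+* R) (x y : P) (hx : φ x ≠ 0)
    (hkey : ∀ f g, φ y * φ f = φ x * φ g → ∃ q, φ f = φ x * φ q)
    (ε : R →+* K) (hεx : ε (φ x) = 0) (hεy : ε (φ y) = 0) :
    RingTheory.Sequence.IsRegular (P ⧸ RingHom.ker φ)
      [Ideal.Quotient.mk (RingHom.ker φ) x, Ideal.Quotient.mk (RingHom.ker φ) y] := by
  have heq : ∀ a b : P, Ideal.Quotient.mk (RingHom.ker φ) a = Ideal.Quotient.mk (RingHom.ker φ) b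
      ↔ φ a = φ b := by
    intro a b
    rw [Ideal.Quotient.eq, RingHom.mem_ker, map_sub, sub_eq_zero]
  refine ⟨?_, ?_⟩
  · rw [RingTheory.Sequence.isWeaklyRegular_cons_iff,
      RingTheory.Sequence.isWeaklyRegular_singleton_iff]
    constructor
    · intro a b hab
      obtain ⟨a, rfl⟩ := Ideal.Quotient.mk_surjective a
      obtain ⟨b, rfl⟩ := Ideal.Quotient.mk_surjective b
      simp only [smul_eq_mul, ← map_mul] at hab
      rw [heq, map_mul, map_mul] at hab
      exact (heq _ _).2 (mul_left_cancel₀ hx hab)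
    · rw [isSMulRegular_quotient_iff_mem_of_smul_mem]
      intro f hf
      obtain ⟨f, rfl⟩ := Ideal.Quotient.mk_surjective f
      rw [Submodule.mem_smul_pointwise_iff_exists] at hf ⊢
      obtain ⟨g, -, hg⟩ := hf
      obtain ⟨g, rfl⟩ := Ideal.Quotient.mk_surjective g
      simp only [smul_eq_mul, ← map_mul] at hg
      rw [heq, map_mul, map_mul] at hg
      obtain ⟨q, hq⟩ := hkey f g hg.symm
      refine ⟨Ideal.Quotient.mk _ q, trivial, ?_⟩
      rw [smul_eq_mul, ← map_mul, heq, map_mul, hq]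
  · intro htop
    have h1 : (1 : P ⧸ RingHom.ker φ) ∈ Ideal.ofList
        [Ideal.Quotient.mk (RingHom.ker φ) x, Ideal.Quotient.mk (RingHom.ker φ) y] := by
      have : (1 : P ⧸ RingHom.ker φ) ∈ (⊤ : Submodule (P ⧸ RingHom.ker φ) _) := trivial
      rw [htop] at this
      simpa using this
    have hle : Ideal.ofList
        [Ideal.Quotient.mk (RingHom.ker φ) x, Ideal.Quotient.mk (RingHom.ker φ) y]
        ≤ RingHom.ker (ε.comp φ.kerLift) := by
      refine Ideal.span_le.2 fun z hz => ?_
      simp only [List.mem_cons, List.not_mem_nil, or_false, Set.mem_ofPred_eq] at hz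
      rcases hz with rfl | rfl
      · simpa [RingHom.mem_ker] using hεx
      · simpa [RingHom.mem_ker] using hεy
    have := hle h1
    rw [RingHom.mem_ker, map_one] at this
    exact one_ne_zero this

theorem main (a0 a1 a2 A : ℕ) (hA : 0 < A)
    (hcomb : ∀ d e : Fin 5 →₀ ℕ, U0 a0 a1 a2 A d = U0 a0 a1 a2 A e + A →
      U1 a0 a1 a2 A d + A = U1 a0 a1 a2 A e →
      ∃ f : Fin 5 →₀ ℕ, U0 a0 a1 a2 A d = U0 a0 a1 a2 A f + A ∧
        U1 a0 a1 a2 A d = U1 a0 a1 a2 A f) :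
    letI IH := RingHom.ker (par k a0 a1 a2 A).toRingHom
    letI Q := MvPolynomial (Fin 5) k ⧸ IH
    ringKrullDim Q = 2 ∧
      ∃ xs : List Q, xs.length = 2 ∧
        (∀ x ∈ xs, x ∈ Ideal.map (Ideal.Quotient.mk IH)
          (Ideal.span (Set.range (X : Fin 5 → MvPolynomial (Fin 5) k)))) ∧
        RingTheory.Sequence.IsRegular Q xs := by
  have p0 : (par k a0 a1 a2 A).toRingHom (X 0) = X 0 ^ A := by simp
  have p4 : (par k a0 a1 a2 A).toRingHom (X 4) = X 1 ^ A := by simp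
  refine ⟨?_, [Ideal.Quotient.mk _ (X 0), Ideal.Quotient.mk _ (X 4)], rfl, ?_, ?_⟩
  · rw [dim_eq _ (par_integral a0 a1 a2 A hA), MvPolynomial.ringKrullDim_of_isNoetherianRing]
    simp
  · intro x hx
    simp only [List.mem_cons, List.not_mem_nil, or_false] at hx
    rcases hx with rfl | rfl
    · exact Ideal.mem_map_of_mem _ (Ideal.subset_span ⟨_, rfl⟩)
    · exact Ideal.mem_map_of_mem _ (Ideal.subset_span ⟨_, rfl⟩)
  · refine regular_of _ _ _ ?_ ?_ (constantCoeff (R := k) (σ := Fin 2)) ?_ ?_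
    · rw [p0]
      exact pow_ne_zero _ (X_ne_zero _)
    · rw [p0, p4]
      exact key a0 a1 a2 A hcomb
    · rw [p0]; simp [hA.ne']
    · rw [p4]; simp [hA.ne']

end Backelin

/-- The projective closure of the Backelin curve is arithmetically
Cohen–Macaulay: the homogeneous coordinate ring `Q = k[x₀,…,x₄]/I^H` (where
`I^H`, the homogenization of the toric ideal, is realized as the kernel of
`x₀ ↦ s^{a₄}`, `x_i ↦ s^{a₄-a_i} t^{a_i}`) has Krull dimension `2` and admits a
regular sequence of length `2` inside the irrelevant maximal ideal, i.e. `Q` is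
a Cohen–Macaulay graded ring. -/
theorem backelin_projective_closure_arithmetically_CM
    (k : Type*) [Field k] (n r : ℕ) (hn : 2 ≤ n) (hr : 3 * n + 2 ≤ r) :
    letI a : Fin 4 → ℕ :=
      ![r * (3 * n + 2) + 3, r * (3 * n + 2) + 3 + 3,
        r * (3 * n + 2) + 3 + 3 * n + 1, r * (3 * n + 2) + 3 + 3 * n + 2]
    letI s : MvPolynomial (Fin 2) k := X 0
    letI t : MvPolynomial (Fin 2) k := X 1
    letI IH : Ideal (MvPolynomial (Fin 5) k) :=
      RingHom.ker (aeval (R := k)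
        ![s ^ a 3, s ^ (a 3 - a 0) * t ^ a 0, s ^ (a 3 - a 1) * t ^ a 1,
          s ^ (a 3 - a 2) * t ^ a 2, t ^ a 3]).toRingHom
    letI Q := MvPolynomial (Fin 5) k ⧸ IH
    ringKrullDim Q = 2 ∧
      ∃ xs : List Q, xs.length = 2 ∧
        (∀ x ∈ xs, x ∈ Ideal.map (Ideal.Quotient.mk IH)
          (Ideal.span (Set.range (X : Fin 5 → MvPolynomial (Fin 5) k)))) ∧
        RingTheory.Sequence.IsRegular Q xs := by
  exact Backelin.main _ _ _ _ (by simp) (Backelin.combinatorial n r hn hr _ _ _ _ rfl rfl rfl rfl)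
end

section
/- For h ≥ 2, the first Betti number (minimal number of generators) of the defining ideal of the projective closure of the Bresinsky curve is 4h+3, the second Betti number is 8h+4, the third is 4h+3, and the fourth is 1; in particular the Cohen–Macaulay type of the projective closure is 1, i.e., it is arithmetically Gorenstein-like of type 1, while all Betti numbers grow unboundedly with h. -/
set_option maxHeartbeats 1000000
set_option synthInstance.maxHeartbeats 400000

open MvPolynomial

namespace Bres

/-- The polynomial ring in five variables. -/
abbrev RR (k : Type*) [Field k] := MvPolynomial (Fin 5) k

section graded
variable {k : Type*} [Field k]

/-- A vector is homogeneous of degree `e` with respect to generator degrees `deg`. -/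
def HomV {ι : Type} (deg : ι → ℕ) (e : ℕ) (v : ι → RR k) : Prop :=
  ∀ i m, coeff m (v i) ≠ 0 → m.degree + deg i = e

/-- A graded linear map. -/
def IsGr {κ ι : Type} (dκ : κ → ℕ) (dι : ι → ℕ) (f : (κ → RR k) →ₗ[RR k] (ι → RR k)) : Prop :=
  ∀ e v, HomV dκ e v → HomV dι e (f v)

lemma HomV.zero {ι : Type} (deg : ι → ℕ) (e : ℕ) : HomV deg e (0 : ι → RR k) := by
  intro i m h; simp at h

lemma HomV.add {ι : Type} {deg : ι → ℕ} {e : ℕ} {v w : ι → RR k} (hv : HomV deg e v)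
    (hw : HomV deg e w) : HomV deg e (v + w) := by
  intro i m h
  by_cases h1 : coeff m (v i) = 0
  · apply hw i m
    intro h2; apply h; simp [h1, h2]
  · exact hv i m h1

lemma HomV.neg {ι : Type} {deg : ι → ℕ} {e : ℕ} {v : ι → RR k} (hv : HomV deg e v) :
    HomV deg e (-v) := by
  intro i m h
  apply hv i m
  intro h2; apply h; simp [h2]

lemma HomV.sum {ι κ : Type} {deg : ι → ℕ} {e : ℕ} (s : Finset κ) (v : κ → ι → RR k)
    (hv : ∀ j ∈ s, HomV deg e (v j)) : HomV deg e (∑ j ∈ s, v j) := by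
  classical
  induction s using Finset.induction_on with
  | empty => simpa using HomV.zero deg e
  | insert a s ha ih =>
    rw [Finset.sum_insert ha]
    exact (hv a (by simp)).add (ih fun j hj => hv j (by simp [hj]))


/-- The projection to the degree `e` part. -/
noncomputable def projV {ι : Type} (deg : ι → ℕ) (e : ℕ) : (ι → RR k) →ₗ[k] (ι → RR k) :=
  LinearMap.pi fun i => (if deg i ≤ e then homogeneousComponent (e - deg i) else 0) ∘ₗ
    LinearMap.proj i

lemma coeff_projV {ι : Type} (deg : ι → ℕ) (e : ℕ) (v : ι → RR k) (i : ι) (m : Fin 5 →₀ ℕ) :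
    coeff m (projV deg e v i) = if m.degree + deg i = e then coeff m (v i) else 0 := by
  by_cases h : deg i ≤ e
  · simp only [projV, LinearMap.pi_apply, h, if_true, LinearMap.comp_apply, LinearMap.proj_apply,
      coeff_homogeneousComponent]
    congr 1
    apply propext; omega
  · simp only [projV, LinearMap.pi_apply, h, if_false, LinearMap.comp_apply, LinearMap.zero_apply]
    rw [if_neg (by omega)]; simp

lemma projV_hom {ι : Type} (deg : ι → ℕ) (e : ℕ) (v : ι → RR k) : HomV deg e (projV deg e v) := by
  intro i m h
  rw [coeff_projV] at h
  by_contra h'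
  simp [h'] at h

lemma projV_of_hom {ι : Type} (deg : ι → ℕ) (e e' : ℕ) (v : ι → RR k) (hv : HomV deg e' v) :
    projV deg e v = if e' = e then v else 0 := by
  funext i
  ext m
  rw [coeff_projV]
  by_cases h : coeff m (v i) = 0
  · split_ifs <;> simp [h]
  · have := hv i m h
    subst this
    split_ifs <;> simp

lemma homV_single {ι : Type} [DecidableEq ι] (deg : ι → ℕ) (j : ι) (m : Fin 5 →₀ ℕ) (c : k) :
    HomV deg (m.degree + deg j) (Pi.single j (monomial m c) : ι → RR k) := by
  intro i m' h
  by_cases hij : i = j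
  · subst hij
    simp only [Pi.single_eq_same, coeff_monomial] at h
    have : m = m' := by by_contra h'; simp [h'] at h
    rw [this]
  · simp [hij] at h

lemma IsGr.comm {κ ι : Type} [Finite κ] {dκ : κ → ℕ} {dι : ι → ℕ}
    {f : (κ → RR k) →ₗ[RR k] (ι → RR k)} (hf : IsGr dκ dι f) (e : ℕ) (v : κ → RR k) :
    f (projV dκ e v) = projV dι e (f v) := by
  classical
  have := Fintype.ofFinite κ
  have : (f.restrictScalars k) ∘ₗ projV dκ e = projV dι e ∘ₗ (f.restrictScalars k) := by
    apply LinearMap.pi_ext'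
    intro j
    apply MvPolynomial.linearMap_ext
    intro m
    ext1
    simp only [LinearMap.comp_apply, LinearMap.coe_restrictScalars, LinearMap.coe_single]
    have h1 := homV_single dκ j m (1 : k)
    rw [projV_of_hom _ _ _ _ h1, projV_of_hom _ _ _ _ (hf _ _ h1)]
    split_ifs <;> simp
  exact LinearMap.congr_fun this v

lemma IsGr.lift {κ ι : Type} [Finite κ] {dκ : κ → ℕ} {dι : ι → ℕ}
    {f : (κ → RR k) →ₗ[RR k] (ι → RR k)} (hf : IsGr dκ dι f) {e : ℕ} {v : ι → RR k}
    (hv : HomV dι e v) (h : v ∈ LinearMap.range f) : ∃ w, HomV dκ e w ∧ f w = v := by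
  obtain ⟨w, rfl⟩ := h
  refine ⟨projV dκ e w, projV_hom _ _ _, ?_⟩
  rw [hf.comm, projV_of_hom _ _ _ _ hv, if_pos rfl]

lemma HomV.smul' {ι κ : Type} {deg : ι → ℕ} {dκ : κ → ℕ} {e : ℕ} {v : ι → RR k} {w : κ → RR k}
    (j : κ) (hv : HomV deg (dκ j) v) (hw : HomV dκ e w) : HomV deg e (w j • v) := by
  intro i m h
  simp only [Pi.smul_apply, smul_eq_mul, coeff_mul] at h
  obtain ⟨⟨a, b⟩, hab, h⟩ := Finset.exists_ne_zero_of_sum_ne_zero h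
  rw [Finset.HasAntidiagonal.mem_antidiagonal] at hab
  have h1 := hw j a (left_ne_zero_of_mul h)
  have h2 := hv i b (right_ne_zero_of_mul h)
  have h3 := congrArg Finsupp.degree hab
  rw [map_add] at h3
  dsimp only at h1 h2 h3
  omega

/-- A linear map given by homogeneous columns. -/
lemma exists_gr {κ ι : Type} [Finite κ] [DecidableEq κ] (dκ : κ → ℕ) (dι : ι → ℕ)
    (c : κ → ι → RR k) (hc : ∀ j, HomV dι (dκ j) (c j)) :
    ∃ f : (κ → RR k) →ₗ[RR k] (ι → RR k), IsGr dκ dι f ∧ ∀ j, f (Pi.single j 1) = c j := by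
  have := Fintype.ofFinite κ
  refine ⟨Fintype.linearCombination (RR k) c, ?_, ?_⟩
  · intro e v hv
    rw [Fintype.linearCombination_apply]
    exact HomV.sum _ _ fun j _ => HomV.smul' j (hc j) hv
  · intro j
    simp [Fintype.linearCombination_apply_single]

variable (k) in
/-- A graded free resolution of a quotient of `R^r` (generators in degree `s`). -/
structure Res (r s : ℕ) where
  ι : ℕ → Type
  fin : ∀ n, Finite (ι n)
  deg : ∀ n, ι n → ℕ
  aug : (ι 0 → RR k) →ₗ[RR k] (Fin r → RR k)
  d : ∀ n, (ι (n+1) → RR k) →ₗ[RR k] (ι n → RR k)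
  graug : IsGr (deg 0) (fun _ => s) aug
  gr : ∀ n, IsGr (deg (n+1)) (deg n) (d n)
  exact0 : LinearMap.range (d 0) = LinearMap.ker aug
  exact : ∀ n, LinearMap.range (d (n+1)) = LinearMap.ker (d n)

/-- index types including the spot `0` -/
def Res.pι {r s : ℕ} (F : Res k r s) : ℕ → Type
  | 0 => Fin r
  | n+1 => F.ι n

/-- degrees including the spot `0` -/
def Res.pdeg {r s : ℕ} (F : Res k r s) : ∀ n, F.pι n → ℕ
  | 0 => fun _ => s
  | n+1 => F.deg n

/-- differentials including the augmentation -/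
def Res.pd {r s : ℕ} (F : Res k r s) : ∀ n, (F.pι (n+1) → RR k) →ₗ[RR k] (F.pι n → RR k)
  | 0 => F.aug
  | n+1 => F.d n

lemma Res.pfin {r s : ℕ} (F : Res k r s) : ∀ n, Finite (F.pι n)
  | 0 => inferInstanceAs (Finite (Fin r))
  | n+1 => F.fin n

lemma Res.pgr {r s : ℕ} (F : Res k r s) : ∀ n, IsGr (F.pdeg (n+1)) (F.pdeg n) (F.pd n)
  | 0 => F.graug
  | n+1 => F.gr n

lemma Res.pexact {r s : ℕ} (F : Res k r s) :
    ∀ n, LinearMap.range (F.pd (n+1)) = LinearMap.ker (F.pd n)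
  | 0 => F.exact0
  | n+1 => F.exact n

lemma Res.pdd {r s : ℕ} (F : Res k r s) (n : ℕ) (x) : F.pd n (F.pd (n+1) x) = 0 := by
  rw [← LinearMap.mem_ker, ← F.pexact n]; exact ⟨x, rfl⟩

/-- Data of one component of a chain map. -/
def Stage {r s r' s' : ℕ} (F : Res k r s) (G : Res k r' s') (n : ℕ) : Type _ :=
  {f : (F.pι n → RR k) →ₗ[RR k] (G.pι n → RR k) //
    IsGr (F.pdeg n) (G.pdeg n) f ∧ ∀ x, f (F.pd n x) ∈ LinearMap.range (G.pd n)}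

section cone
variable {r s r' s' : ℕ} (F : Res k r s) (G : Res k r' s')

lemma exists_next (n : ℕ) (f : Stage F G n) :
    ∃ f' : Stage F G (n+1), ∀ x, G.pd n (f'.1 x) = f.1 (F.pd n x) := by
  classical
  have := F.pfin (n+1)
  have := G.pfin (n+1)
  have key : ∀ j : F.pι (n+1), ∃ w, HomV (G.pdeg (n+1)) (F.pdeg (n+1) j) w ∧
      G.pd n w = f.1 (F.pd n (Pi.single j 1)) := by
    intro j
    apply (G.pgr n).lift _ (f.2.2 _)
    apply f.2.1
    apply F.pgr n
    have := homV_single (k := k) (F.pdeg (n+1)) j 0 1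
    simpa using this
  choose c hc1 hc2 using key
  obtain ⟨g, hg, hgc⟩ := exists_gr (F.pdeg (n+1)) (G.pdeg (n+1)) c hc1
  have hcomm : ∀ x, G.pd n (g x) = f.1 (F.pd n x) := by
    have : G.pd n ∘ₗ g = f.1 ∘ₗ F.pd n := by
      apply LinearMap.pi_ext'
      intro j
      ext1
      simp only [LinearMap.comp_apply, LinearMap.coe_single]
      rw [hgc, hc2]
    exact fun x => LinearMap.congr_fun this x
  refine ⟨⟨g, hg, ?_⟩, hcomm⟩
  intro x
  rw [G.pexact n, LinearMap.mem_ker, hcomm, F.pdd, map_zero]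

/-- The chain map. -/
noncomputable def chain (f : Stage F G 0) : ∀ n, Stage F G n
  | 0 => f
  | n+1 => (exists_next F G n (chain f n)).choose

lemma chain_comm (f : Stage F G 0) (n : ℕ) (x) :
    G.pd n ((chain F G f (n+1)).1 x) = (chain F G f n).1 (F.pd n x) :=
  (exists_next F G n (chain F G f n)).choose_spec x

lemma exists_chain (f0 : (Fin r → RR k) →ₗ[RR k] (Fin r' → RR k))
    (hgr : IsGr (fun _ => s) (fun _ => s') f0)
    (hf : ∀ x, x ∈ LinearMap.range F.aug → f0 x ∈ LinearMap.range G.aug) :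
    ∃ c : ∀ n, (F.pι (n+1) → RR k) →ₗ[RR k] (G.ι n → RR k),
      (∀ n, IsGr (F.pdeg (n+1)) (G.deg n) (c n)) ∧
      (∀ x, G.aug (c 0 x) = f0 (F.aug x)) ∧
      ∀ n x, G.d n (c (n+1) x) = c n (F.pd (n+1) x) := by
  let f : Stage F G 0 := ⟨f0, hgr, fun x => hf _ ⟨x, rfl⟩⟩
  exact ⟨fun n => (chain F G f (n+1)).1, fun n => (chain F G f (n+1)).2.1,
    chain_comm F G f 0, fun n => chain_comm F G f (n+1)⟩

lemma elim_eq_zero {α β : Type} {u : α → RR k} {v : β → RR k} :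
    Sum.elim u v = 0 ↔ u = 0 ∧ v = 0 := by
  constructor
  · intro h
    exact ⟨funext fun i => congrFun h (Sum.inl i), funext fun i => congrFun h (Sum.inr i)⟩
  · rintro ⟨rfl, rfl⟩
    funext i; cases i <;> rfl

/-- Combine two maps out of the summands. -/
noncomputable def coneAug {α β γ : Type} (u : (α → RR k) →ₗ[RR k] (γ → RR k))
    (v : (β → RR k) →ₗ[RR k] (γ → RR k)) : (α ⊕ β → RR k) →ₗ[RR k] (γ → RR k) :=
  u ∘ₗ LinearMap.funLeft _ _ Sum.inl + v ∘ₗ LinearMap.funLeft _ _ Sum.inr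

lemma coneAug_apply {α β γ : Type} (u : (α → RR k) →ₗ[RR k] (γ → RR k))
    (v : (β → RR k) →ₗ[RR k] (γ → RR k)) (x) :
    coneAug u v x = u (x ∘ Sum.inl) + v (x ∘ Sum.inr) := rfl

/-- The block triangular map. -/
noncomputable def coneD {α β γ δ : Type} (u : (α → RR k) →ₗ[RR k] (γ → RR k))
    (v : (β → RR k) →ₗ[RR k] (γ → RR k)) (w : (β → RR k) →ₗ[RR k] (δ → RR k)) :
    (α ⊕ β → RR k) →ₗ[RR k] (γ ⊕ δ → RR k) :=
  (LinearEquiv.sumArrowLequivProdArrow _ _ (RR k) (RR k)).symm.toLinearMap ∘ₗ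
      LinearMap.prod (coneAug u v) (-(w ∘ₗ LinearMap.funLeft _ _ Sum.inr))

lemma coneD_apply {α β γ δ : Type} (u : (α → RR k) →ₗ[RR k] (γ → RR k))
    (v : (β → RR k) →ₗ[RR k] (γ → RR k)) (w : (β → RR k) →ₗ[RR k] (δ → RR k)) (x) :
    coneD u v w x = Sum.elim (u (x ∘ Sum.inl) + v (x ∘ Sum.inr)) (-(w (x ∘ Sum.inr))) := by
  funext i
  cases i <;> rfl

lemma coneAug_gr {α β γ : Type} {dα : α → ℕ} {dβ : β → ℕ} {dγ : γ → ℕ}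
    {u : (α → RR k) →ₗ[RR k] (γ → RR k)}
    {v : (β → RR k) →ₗ[RR k] (γ → RR k)} (hu : IsGr dα dγ u) (hv : IsGr dβ dγ v) :
    IsGr (Sum.elim dα dβ) dγ (coneAug u v) := by
  intro e x hx
  rw [coneAug_apply]
  exact (hu _ _ fun i m h => hx (Sum.inl i) m h).add (hv _ _ fun i m h => hx (Sum.inr i) m h)

lemma coneD_gr {α β γ δ : Type} {dα : α → ℕ} {dβ : β → ℕ} {dγ : γ → ℕ} {dδ : δ → ℕ}
    {u : (α → RR k) →ₗ[RR k] (γ → RR k)}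
    {v : (β → RR k) →ₗ[RR k] (γ → RR k)} {w : (β → RR k) →ₗ[RR k] (δ → RR k)}
    (hu : IsGr dα dγ u) (hv : IsGr dβ dγ v) (hw : IsGr dβ dδ w) :
    IsGr (Sum.elim dα dβ) (Sum.elim dγ dδ) (coneD u v w) := by
  intro e x hx
  rw [coneD_apply]
  have h1 := (hu _ _ fun i m h => hx (Sum.inl i) m h).add
    (hv _ _ fun i m h => hx (Sum.inr i) m h)
  have h2 := (hw _ _ fun i m h => hx (Sum.inr i) m h).neg
  intro i m h
  cases i with
  | inl i => exact h1 i m h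
  | inr i => exact h2 i m h

lemma ext_elim {α β : Type} {x y : α ⊕ β → RR k} (h1 : x ∘ Sum.inl = y ∘ Sum.inl)
    (h2 : x ∘ Sum.inr = y ∘ Sum.inr) : x = y := by
  funext i
  cases i with
  | inl i => exact congrFun h1 i
  | inr i => exact congrFun h2 i

/-- The mapping cone. -/
theorem exists_cone (f0 : (Fin r → RR k) →ₗ[RR k] (Fin r' → RR k))
    (hgr : IsGr (fun _ => s) (fun _ => s') f0)
    (hf : ∀ x, f0 x ∈ LinearMap.range G.aug ↔ x ∈ LinearMap.range F.aug) :
    ∃ C : Res k r' s', LinearMap.range C.aug = LinearMap.range G.aug ⊔ LinearMap.range f0 ∧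
      (∀ n, Nat.card (C.ι n) = Nat.card (G.ι n) + Nat.card (F.pι n)) ∧
      (∀ n, Set.range (C.deg n) = Set.range (G.deg n) ∪ Set.range (F.pdeg n)) := by
  obtain ⟨c, hc, hc0, hcs⟩ := exists_chain F G f0 hgr (fun x hx => (hf x).2 hx)
  have hG0 : ∀ x, G.aug (G.d 0 x) = 0 := G.pdd 0
  have hGs : ∀ n x, G.d n (G.d (n+1) x) = 0 := fun n => G.pdd (n+1)
  have hF0 : ∀ x, F.aug (F.pd 1 x) = 0 := F.pdd 0
  have hFk : ∀ n x, F.pd n x = 0 → ∃ y, F.pd (n+1) y = x := by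
    intro n x hx
    rw [← LinearMap.mem_ker, ← F.pexact n] at hx
    exact hx
  let f : (F.pι 0 → RR k) →ₗ[RR k] (Fin r' → RR k) := f0
  have hc0' : ∀ x, G.aug (c 0 x) = f (F.pd 0 x) := hc0
  have hf' : ∀ x, f x ∈ LinearMap.range G.aug → ∃ y, F.pd 0 y = x := fun x hx => (hf x).1 hx
  refine ⟨{
    ι := fun n => G.ι n ⊕ F.pι n
    fin := fun n => by
      have := F.pfin n; have := G.fin n
      infer_instance
    deg := fun n => Sum.elim (G.deg n) (F.pdeg n)
    aug := coneAug G.aug f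
    d := fun n => coneD (G.d n) (c n) (F.pd n)
    graug := coneAug_gr G.graug hgr
    gr := fun n => coneD_gr (G.gr n) (hc n) (F.pgr n)
    exact0 := ?_
    exact := ?_ }, ?_, ?_, ?_⟩
  · apply le_antisymm
    · rintro _ ⟨v, rfl⟩
      rw [LinearMap.mem_ker, coneD_apply, coneAug_apply, Sum.elim_comp_inl, Sum.elim_comp_inr,
        map_add, hG0, hc0', map_neg]
      simp
    · intro v hv
      rw [LinearMap.mem_ker, coneAug_apply] at hv
      obtain ⟨x', hx'⟩ : ∃ x', F.pd 0 x' = v ∘ Sum.inr := by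
        apply hf'
        refine ⟨-(v ∘ Sum.inl), ?_⟩
        rw [map_neg, neg_eq_iff_add_eq_zero]
        exact hv
      have hg : v ∘ Sum.inl + c 0 x' ∈ LinearMap.ker G.aug := by
        rw [LinearMap.mem_ker, map_add, hc0', hx', hv]
      rw [← G.exact0] at hg
      obtain ⟨g', hg'⟩ := hg
      refine ⟨Sum.elim g' (-x'), ?_⟩
      rw [coneD_apply, Sum.elim_comp_inl, Sum.elim_comp_inr, hg', map_neg, map_neg, hx']
      apply ext_elim <;> simp
  · intro n
    apply le_antisymm
    · rintro _ ⟨v, rfl⟩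
      rw [LinearMap.mem_ker, coneD_apply, coneD_apply, Sum.elim_comp_inl, Sum.elim_comp_inr,
        elim_eq_zero, map_add, hGs, hcs, map_neg, map_neg, F.pdd]
      simp
    · intro v hv
      rw [LinearMap.mem_ker, coneD_apply, elim_eq_zero] at hv
      obtain ⟨x', hx'⟩ := hFk n (v ∘ Sum.inr) (by simpa using hv.2)
      have hg : v ∘ Sum.inl + c (n+1) x' ∈ LinearMap.ker (G.d n) := by
        rw [LinearMap.mem_ker, map_add, hcs, hx', hv.1]
      rw [← G.exact] at hg
      obtain ⟨g', hg'⟩ := hg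
      refine ⟨Sum.elim g' (-x'), ?_⟩
      rw [coneD_apply, Sum.elim_comp_inl, Sum.elim_comp_inr, hg', map_neg, map_neg, hx']
      apply ext_elim <;> simp
  · apply le_antisymm
    · rintro _ ⟨v, rfl⟩
      exact Submodule.add_mem_sup ⟨_, rfl⟩ ⟨_, rfl⟩
    · rw [sup_le_iff]
      constructor
      · rintro _ ⟨v, rfl⟩
        refine ⟨Sum.elim v 0, ?_⟩
        rw [coneAug_apply, Sum.elim_comp_inl, Sum.elim_comp_inr, map_zero, add_zero]
      · rintro _ ⟨v, rfl⟩
        let v' : F.pι 0 → RR k := v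
        have h : coneAug G.aug f (Sum.elim 0 v') = f v' := by
          rw [coneAug_apply, Sum.elim_comp_inl, Sum.elim_comp_inr, map_zero, zero_add]
        exact ⟨Sum.elim 0 v', h⟩
  · intro n
    have := F.pfin n; have := G.fin n
    exact Nat.card_sum
  · intro n
    exact Set.Sum.elim_range _ _
end cone

variable (k) in
/-- The resolution of a free module by itself. -/
noncomputable def base (r s : ℕ) : Res k r s where
  ι _ := Empty
  fin n := inferInstance
  deg _ _ := s
  aug := 0
  d _ := 0
  graug := fun e v _ => HomV.zero _ _
  gr n := fun e v _ => HomV.zero _ _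
  exact0 := by
    apply le_antisymm
    · rintro _ ⟨v, rfl⟩; simp
    · intro v _
      have : v = 0 := funext fun i => isEmptyElim i
      rw [this]; exact zero_mem _
  exact n := by
    apply le_antisymm
    · rintro _ ⟨v, rfl⟩; simp
    · intro v _
      have : v = 0 := funext fun i => isEmptyElim i
      rw [this]; exact zero_mem _

lemma IsGr.shift {κ ι : Type} {dκ : κ → ℕ} {dι : ι → ℕ}
    {f : (κ → RR k) →ₗ[RR k] (ι → RR k)} (hf : IsGr dκ dι f) (t : ℕ) :
    IsGr (fun i => dκ i + t) (fun i => dι i + t) f := by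
  intro e v hv
  by_cases he : t ≤ e
  · have := hf (e - t) v (fun i m h => by have := hv i m h; dsimp only at this; omega)
    intro i m h
    have := this i m h
    dsimp only; omega
  · have : v = 0 := by
      funext i; ext m
      by_contra h
      have := hv i m h
      dsimp only at this
      omega
    rw [this, map_zero]; exact HomV.zero _ _

/-- Shift of degrees. -/
def Res.shift {r s : ℕ} (F : Res k r s) (t : ℕ) : Res k r (s + t) where
  ι := F.ι
  fin := F.fin
  deg n i := F.deg n i + t
  aug := F.aug
  d := F.d
  graug := F.graug.shift t
  gr n := (F.gr n).shift t
  exact0 := F.exact0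
  exact := F.exact

/-- Numerical summary of a resolution: ranks and sets of degrees. -/
structure Res.Num {r s : ℕ} (F : Res k r s) (c : ℕ → ℕ) (D : ℕ → Set ℕ) : Prop where
  card : ∀ n, Nat.card (F.ι n) = c n
  degs : ∀ n i, F.deg n i ∈ D n

/-- shifting sequences by one -/
def consN {α : Type} (x : α) (c : ℕ → α) : ℕ → α
  | 0 => x
  | n+1 => c n

lemma base_num (r s : ℕ) : (base k r s).Num (fun _ => 0) (fun _ => ∅) :=
  ⟨fun _ => Nat.card_of_isEmpty (α := Empty), fun _ i => isEmptyElim (α := Empty) i⟩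

lemma Res.Num.shift {r s : ℕ} {F : Res k r s} {c : ℕ → ℕ} {D : ℕ → Set ℕ} (h : F.Num c D) (t : ℕ) :
    (F.shift t).Num c (fun n => (· + t) '' D n) :=
  ⟨h.card, fun n i => ⟨_, h.degs n i, rfl⟩⟩

/-- The mapping cone, with numerical data. -/
theorem exists_cone_num {r s r' s' : ℕ} (F : Res k r s) (G : Res k r' s')
    (f0 : (Fin r → RR k) →ₗ[RR k] (Fin r' → RR k))
    (hgr : IsGr (fun _ => s) (fun _ => s') f0)
    (hf : ∀ x, f0 x ∈ LinearMap.range G.aug ↔ x ∈ LinearMap.range F.aug)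
    {c c' : ℕ → ℕ} {D D' : ℕ → Set ℕ} (hF : F.Num c D) (hG : G.Num c' D') :
    ∃ C : Res k r' s', LinearMap.range C.aug = LinearMap.range G.aug ⊔ LinearMap.range f0 ∧
      C.Num (fun n => c' n + consN r c n) (fun n => D' n ∪ consN {s} D n) := by
  obtain ⟨C, h1, h2, h3⟩ := exists_cone F G f0 hgr hf
  refine ⟨C, h1, ?_, ?_⟩
  · intro n
    rw [h2, hG.card]
    cases n with
    | zero => exact congrArg _ (Nat.card_fin r)
    | succ n => exact congrArg _ (hF.card n)
  · intro n i
    have : C.deg n i ∈ Set.range (C.deg n) := ⟨i, rfl⟩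
    rw [h3] at this
    rcases this with ⟨j, hj⟩ | ⟨j, hj⟩
    · left; rw [← hj]; exact hG.degs n j
    · right
      rw [← hj]
      cases n with
      | zero => exact rfl
      | succ n => exact hF.degs n j

end graded
end Bres

namespace Bres

section toric

/-- The kernel of a linear map sending basis vectors to independent vectors is spanned by
differences of basis vectors. -/
lemma toric_ker {k V W A T : Type*} [Field k] [AddCommGroup V] [Module k V] [AddCommGroup W]
    [Module k W] (𝔟 : Module.Basis A k V) (ω : T → W) (hω : LinearIndependent k ω)
    (f : V →ₗ[k] W) (Θ : A → T) (hf : ∀ a, f (𝔟 a) = ω (Θ a)) (K : Submodule k V)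
    (hK : ∀ a a', Θ a = Θ a' → 𝔟 a - 𝔟 a' ∈ K) (x : V) (hx : f x = 0) : x ∈ K := by
  classical
  have h1 : Finsupp.linearCombination k ω (Finsupp.mapDomain Θ (𝔟.repr x)) = 0 := by
    rw [Finsupp.linearCombination_mapDomain]
    have : (ω ∘ Θ) = fun a => f (𝔟 a) := funext fun a => (hf a).symm
    rw [this]
    have h2 : Finsupp.linearCombination k (fun a => f (𝔟 a)) (𝔟.repr x) =
        f (Finsupp.linearCombination k 𝔟 (𝔟.repr x)) := by
      rw [Finsupp.apply_linearCombination]; rfl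
    rw [h2, 𝔟.linearCombination_repr, hx]
  have h3 : Finsupp.mapDomain Θ (𝔟.repr x) = 0 := (linearIndependent_iff.1 hω) _ h1
  let v : T → V ⧸ K := fun t => if h : ∃ a, Θ a = t then K.mkQ (𝔟 h.choose) else 0
  have hv : ∀ a, v (Θ a) = K.mkQ (𝔟 a) := by
    intro a
    have h : ∃ a', Θ a' = Θ a := ⟨a, rfl⟩
    simp only [v, dif_pos h]
    rw [← sub_eq_zero, ← map_sub, Submodule.mkQ_apply, Submodule.Quotient.mk_eq_zero]
    exact hK _ _ h.choose_spec
  have h4 : Finsupp.linearCombination k v (Finsupp.mapDomain Θ (𝔟.repr x)) = K.mkQ x := by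
    rw [Finsupp.linearCombination_mapDomain]
    have : (v ∘ Θ) = fun a => K.mkQ (𝔟 a) := funext hv
    rw [this]
    have h2 : Finsupp.linearCombination k (fun a => K.mkQ (𝔟 a)) (𝔟.repr x) =
        K.mkQ (Finsupp.linearCombination k 𝔟 (𝔟.repr x)) := by
      rw [Finsupp.apply_linearCombination]; rfl
    rw [h2, 𝔟.linearCombination_repr]
  rw [h3, map_zero] at h4
  rw [← Submodule.Quotient.mk_eq_zero, ← Submodule.mkQ_apply, ← h4]

variable {k : Type*} [Field k]

lemma prod_X_eq {σ : Type} [Fintype σ] (m : σ → ℕ) :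
    (∏ i, (X i : MvPolynomial σ k) ^ m i) = monomial (Finsupp.equivFunOnFinite.symm m) 1 := by
  rw [monomial_eq, Finsupp.prod_fintype _ _ (by simp)]
  simp

lemma linInd_mon {σ : Type} [Fintype σ] :
    LinearIndependent k (fun m : σ → ℕ => (∏ i, (X i : MvPolynomial σ k) ^ m i)) := by
  have h := (basisMonomials σ k).linearIndependent
  have h2 := h.comp (Finsupp.equivFunOnFinite.symm : (σ → ℕ) → (σ →₀ ℕ))
    (Equiv.injective _)
  have h3 : (fun m : σ → ℕ => (∏ i, (X i : MvPolynomial σ k) ^ m i)) =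
      (basisMonomials σ k) ∘ (Finsupp.equivFunOnFinite.symm : (σ → ℕ) → (σ →₀ ℕ)) := by
    funext m
    rw [prod_X_eq, Function.comp_apply, coe_basisMonomials]
  rw [h3]
  exact h2

lemma aeval_mon {σ : Type} (g : Fin 5 → MvPolynomial σ k) (m : Fin 5 →₀ ℕ) :
    aeval (R := k) g (monomial m (1 : k)) = ∏ i, g i ^ m i := by
  rw [aeval_monomial, Finsupp.prod_fintype _ _ (fun i => pow_zero _), map_one, one_mul]

lemma ring_toric {σ : Type} [Fintype σ] (g : Fin 5 → MvPolynomial σ k)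
    (E : (Fin 5 → ℕ) → (σ → ℕ)) (hE : ∀ m, ∏ i, g i ^ m i = ∏ j, X j ^ (E m j))
    (J : Ideal (RR k))
    (hJ : ∀ m m' : Fin 5 → ℕ, E m = E m' →
      Ideal.Quotient.mk J (∏ i, X i ^ m i) = Ideal.Quotient.mk J (∏ i, X i ^ m' i))
    (x : RR k) (hx : aeval g x = 0) : x ∈ J := by
  refine toric_ker (basisMonomials (Fin 5) k) _ linInd_mon (aeval (R := k) g).toLinearMap
    (fun m => E m) ?_ (J.restrictScalars k) ?_ x hx
  · intro m
    rw [← hE, coe_basisMonomials]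
    exact aeval_mon g m
  · intro m m' h
    have := hJ m m' h
    rw [Ideal.Quotient.eq, prod_X_eq, prod_X_eq] at this
    simpa using this

/-- semilinear evaluation of a vector -/
noncomputable def tau {σ : Type} {n : ℕ} (g : Fin 5 → MvPolynomial σ k)
    (mm : Fin n → MvPolynomial σ k) : (Fin n → RR k) →ₗ[k] MvPolynomial σ k :=
  ∑ i, (LinearMap.mulRight k (mm i)) ∘ₗ (aeval (R := k) g).toLinearMap ∘ₗ LinearMap.proj i

lemma tau_apply {σ : Type} {n : ℕ} (g : Fin 5 → MvPolynomial σ k)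
    (mm : Fin n → MvPolynomial σ k) (v : Fin n → RR k) :
    tau g mm v = ∑ i, aeval g (v i) * mm i := by
  simp [tau]

lemma tau_smul {σ : Type} {n : ℕ} (g : Fin 5 → MvPolynomial σ k)
    (mm : Fin n → MvPolynomial σ k) (r : RR k) (v : Fin n → RR k) :
    tau g mm (r • v) = aeval g r * tau g mm v := by
  simp [tau_apply, Finset.mul_sum, mul_assoc]

lemma tau_single {σ : Type} {n : ℕ} (g : Fin 5 → MvPolynomial σ k)
    (mm : Fin n → MvPolynomial σ k) (i : Fin n) (p : RR k) :
    tau g mm (Pi.single i p) = aeval g p * mm i := by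
  rw [tau_apply, Finset.sum_eq_single i]
  · simp
  · intro j _ hj; simp [hj]
  · simp

lemma mod_toric {σ : Type} [Fintype σ] {n : ℕ} (g : Fin 5 → MvPolynomial σ k)
    (mm : Fin n → MvPolynomial σ k)
    (E : (Fin 5 → ℕ) → Fin n → (σ → ℕ)) (hE : ∀ m i, (∏ i, g i ^ m i) * mm i = ∏ j, X j ^ (E m i j))
    (K : Submodule (RR k) (Fin n → RR k))
    (hK : ∀ (m m' : Fin 5 → ℕ) (i i' : Fin n), E m i = E m' i' →
      (∏ i, X i ^ m i : RR k) • K.mkQ (Pi.single i 1) = (∏ i, X i ^ m' i : RR k) • K.mkQ (Pi.single i' 1))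
    (x : Fin n → RR k) (hx : tau g mm x = 0) : x ∈ K := by
  refine toric_ker (Pi.basis fun _ : Fin n => basisMonomials (Fin 5) k) _ linInd_mon (tau g mm)
    (fun m => E m.2 m.1) ?_ (K.restrictScalars k) ?_ x hx
  · rintro ⟨i, m⟩
    rw [← hE, Pi.basis_apply, tau_single, coe_basisMonomials]
    dsimp only
    rw [aeval_mon g m]
  · rintro ⟨i, m⟩ ⟨i', m'⟩ h
    have := hK m m' i i' h
    rw [← map_smul, ← map_smul, ← sub_eq_zero, ← map_sub, Submodule.mkQ_apply,
      Submodule.Quotient.mk_eq_zero, prod_X_eq, prod_X_eq, ← Pi.single_smul, ← Pi.single_smul] at this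
    simpa [Pi.basis_apply] using this

end toric

section monomials

/-- monomials in five elements -/
def mon {Q : Type*} [CommRing Q] (y : Fin 5 → Q) (e0 e1 e2 e3 e4 : ℕ) : Q :=
  y 0 ^ e0 * y 1 ^ e1 * y 2 ^ e2 * y 3 ^ e3 * y 4 ^ e4

lemma mon_mul {Q : Type*} [CommRing Q] (y : Fin 5 → Q) (e0 e1 e2 e3 e4 f0 f1 f2 f3 f4 : ℕ) :
    mon y (e0 + f0) (e1 + f1) (e2 + f2) (e3 + f3) (e4 + f4) =
      mon y e0 e1 e2 e3 e4 * mon y f0 f1 f2 f3 f4 := by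
  simp only [mon, pow_add]; ring

lemma mon_congr {Q : Type*} [CommRing Q] (y : Fin 5 → Q) {e0 e1 e2 e3 e4 f0 f1 f2 f3 f4 : ℕ}
    (h0 : e0 = f0) (h1 : e1 = f1) (h2 : e2 = f2) (h3 : e3 = f3) (h4 : e4 = f4) :
    mon y e0 e1 e2 e3 e4 = mon y f0 f1 f2 f3 f4 := by
  subst h0 h1 h2 h3 h4; rfl

lemma segre_aux {Q : Type*} [CommRing Q] (y : Fin 5 → Q) (hq : y 1 * y 4 = y 2 * y 3)
    {e0 e1 e2 e3 e4 f1 f2 f3 f4 : ℕ} (hW : e1 + e2 + e3 + e4 = f1 + f2 + f3 + f4)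
    (hP : e1 + e2 = f1 + f2) (hD : e2 + e4 = f2 + f4) (hle : e2 ≤ f2) :
    mon y e0 e1 e2 e3 e4 = mon y e0 f1 f2 f3 f4 := by
  obtain ⟨t, rfl⟩ := Nat.exists_eq_add_of_le hle
  obtain rfl : e1 = f1 + t := by omega
  obtain rfl : e4 = f4 + t := by omega
  obtain rfl : f3 = e3 + t := by omega
  have : y 1 ^ t * y 4 ^ t = y 2 ^ t * y 3 ^ t := by rw [← mul_pow, ← mul_pow, hq]
  simp only [mon, pow_add]
  linear_combination (y 0 ^ e0 * y 1 ^ f1 * y 2 ^ e2 * y 3 ^ e3 * y 4 ^ f4) * this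

lemma segre {Q : Type*} [CommRing Q] (y : Fin 5 → Q) (hq : y 1 * y 4 = y 2 * y 3)
    {e0 e1 e2 e3 e4 f1 f2 f3 f4 : ℕ} (hW : e1 + e2 + e3 + e4 = f1 + f2 + f3 + f4)
    (hP : e1 + e2 = f1 + f2) (hD : e2 + e4 = f2 + f4) :
    mon y e0 e1 e2 e3 e4 = mon y e0 f1 f2 f3 f4 := by
  rcases le_total e2 f2 with h | h
  · exact segre_aux y hq hW hP hD h
  · exact (segre_aux y hq hW.symm hP.symm hD.symm h).symm

lemma theta_aux {Q : Type*} [CommRing Q] (y : Fin 5 → Q) (a : ℕ) (hq : y 1 * y 4 = y 2 * y 3)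
    (hf : y 2 ^ (a + 1) = y 0 * y 3 ^ a)
    {e0 e1 e2 e3 e4 f0 f1 f2 f3 f4 : ℕ} (hW : e0 + e1 + e2 + e3 + e4 = f0 + f1 + f2 + f3 + f4)
    (hP : (a + 1) * e0 + e1 + e2 = (a + 1) * f0 + f1 + f2)
    (hD : (a + 1) * e0 + e2 + e4 = (a + 1) * f0 + f2 + f4) (hle : e0 ≤ f0) :
    mon y e0 e1 e2 e3 e4 = mon y f0 f1 f2 f3 f4 := by
  obtain ⟨t, rfl⟩ := Nat.exists_eq_add_of_le hle
  obtain ⟨at', hat⟩ : ∃ z, z = a * t := ⟨_, rfl⟩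
  have hP' : e1 + e2 = at' + t + f1 + f2 := by rw [hat]; linarith
  have hD' : e2 + e4 = at' + t + f2 + f4 := by rw [hat]; linarith
  obtain ⟨V, hV⟩ : ∃ V, e1 + e2 + e3 + e4 = V + (at' + t) := ⟨e1 + e2 + e3 + e4 - (at' + t), by omega⟩
  obtain ⟨u2, hu2⟩ : ∃ u2, u2 = (f1 + f2) + (f2 + f4) - V := ⟨_, rfl⟩
  have key : y 2 ^ (at' + t) = y 0 ^ t * y 3 ^ at' := by
    rw [hat, show a * t + t = (a + 1) * t by ring, pow_mul, hf, mul_pow, pow_mul]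
  calc mon y e0 e1 e2 e3 e4
      = mon y e0 (f1 + f2 - u2) (u2 + (at' + t)) (V + u2 - (f1 + f2) - (f2 + f4)) (f2 + f4 - u2) := by
        apply segre y hq <;> omega
    _ = mon y (e0 + t) (f1 + f2 - u2) u2 (V + u2 - (f1 + f2) - (f2 + f4) + at') (f2 + f4 - u2) := by
        have key' : y 2 ^ at' * y 2 ^ t = y 0 ^ t * y 3 ^ at' := by rw [← pow_add]; exact key
        simp only [mon, pow_add]
        generalize y 2 ^ at' = A at *
        generalize y 2 ^ t = B at *
        linear_combination (y 0 ^ e0 * y 1 ^ (f1 + f2 - u2) * y 2 ^ u2 *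
          y 3 ^ (V + u2 - (f1 + f2) - (f2 + f4)) * y 4 ^ (f2 + f4 - u2)) * key'
    _ = _ := by apply segre y hq <;> omega

lemma theta_eq {Q : Type*} [CommRing Q] (y : Fin 5 → Q) (a : ℕ) (hq : y 1 * y 4 = y 2 * y 3)
    (hf : y 2 ^ (a + 1) = y 0 * y 3 ^ a)
    {e0 e1 e2 e3 e4 f0 f1 f2 f3 f4 : ℕ} (hW : e0 + e1 + e2 + e3 + e4 = f0 + f1 + f2 + f3 + f4)
    (hP : (a + 1) * e0 + e1 + e2 = (a + 1) * f0 + f1 + f2)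
    (hD : (a + 1) * e0 + e2 + e4 = (a + 1) * f0 + f2 + f4) :
    mon y e0 e1 e2 e3 e4 = mon y f0 f1 f2 f3 f4 := by
  rcases le_total e0 f0 with h | h
  · exact theta_aux y a hq hf hW hP hD h
  · exact (theta_aux y a hq hf hW.symm hP.symm hD.symm h).symm

/-- one step of translation by `(0, a, 2b)` -/
lemma step_exists (a : ℕ) (ha : 1 ≤ a)
    {e0 e1 e2 e3 e4 f0 f1 f2 f3 f4 t : ℕ} (ht : 1 ≤ t)
    (hW : e0 + e1 + e2 + e3 + e4 = f0 + f1 + f2 + f3 + f4)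
    (hP : (a + 1) * e0 + e1 + e2 + t * a = (a + 1) * f0 + f1 + f2)
    (hD : (a + 1) * e0 + e2 + e4 + t * (2 * (a + 1)) = (a + 1) * f0 + f2 + f4)
    (hmax : e1 + e2 < a + 1 ∨ e2 + e4 < a + 1) :
    (1 ≤ e1 + e2 ∧ a + 2 + (e2 + e4) ≤ e1 + e2 + e3 + e4) ∨
    (a + 2 ≤ e1 + e2 ∧ 2 + (e2 + e4) ≤ e1 + e2 + e3 + e4) ∨
    (e1 + e2 + 2 * (a + 1) ≤ e1 + e2 + e3 + e4 ∧ e2 + e4 + 2 * (a + 1) ≤ e1 + e2 + e3 + e4) := by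
  obtain ⟨V, hV⟩ : ∃ V, V = e1 + e2 + e3 + e4 := ⟨_, rfl⟩
  obtain ⟨P, hPd⟩ : ∃ P, P = e1 + e2 := ⟨_, rfl⟩
  obtain ⟨D, hDd⟩ : ∃ D, D = e2 + e4 := ⟨_, rfl⟩
  rw [← hV, ← hPd, ← hDd]
  rw [← hPd, ← hDd] at hmax
  have hPV : P ≤ V := by omega
  have hDV : D ≤ V := by omega
  zify at *
  obtain ⟨ε, hε⟩ : ∃ ε : ℤ, ε = f0 - e0 := ⟨_, rfl⟩
  have hf0 : (f0 : ℤ) = e0 + ε := by linarith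
  rw [hf0] at hW hP hD
  have p1 : (0 : ℤ) ≤ f1 := by positivity
  have p2 : (0 : ℤ) ≤ f2 := by positivity
  have p3 : (0 : ℤ) ≤ f3 := by positivity
  have p4 : (0 : ℤ) ≤ f4 := by positivity
  have i1 : (t : ℤ) * a - a * ε ≤ V - P := by nlinarith
  have i2 : ((a : ℤ) + 1) * ε - t * a ≤ P := by nlinarith
  have i3 : 2 * ((a : ℤ) + 1) * t - a * ε ≤ V - D := by nlinarith
  have i4 : ((a : ℤ) + 1) * ε - 2 * ((a : ℤ) + 1) * t ≤ D := by nlinarith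
  have hP0 : (0 : ℤ) ≤ P := by positivity
  have hD0 : (0 : ℤ) ≤ D := by positivity
  clear hW hP hD hV hPd hDd hε hf0
  rcases le_or_gt ε 0 with h1 | h1
  · have i5 : 2 * ((a : ℤ) + 1) ≤ V - D := by nlinarith
    rcases le_or_gt (1 : ℤ) P with h2 | h2
    · left; constructor <;> linarith
    · right; right; constructor <;> linarith
  rcases le_or_gt ε t with h3 | h3
  · rcases le_or_gt (1 : ℤ) P with h2 | h2
    · left; refine ⟨h2, ?_⟩; nlinarith
    · have h4 : ε + 1 ≤ t := by
        by_contra hc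
        have : t = ε := by linarith [Int.lt_add_one_iff.1 (not_le.1 hc)]
        nlinarith
      right; right
      have i5 : 2 * ((a : ℤ) + 1) ≤ V - D := by nlinarith
      constructor <;> linarith
  · have i5 : (a : ℤ) + 1 + t ≤ P := by nlinarith
    have i6 : (D : ℤ) < a + 1 := by
      rcases hmax with h | h
      · linarith
      · exact h
    have i7 : ε ≤ 2 * t := by
      by_contra hc
      have : 2 * t + 1 ≤ ε := by linarith [Int.add_one_le_iff.2 (not_le.1 hc)]
      nlinarith
    right; left
    constructor
    · linarith
    · nlinarith

/-- relations of the ideal without the last generator -/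
structure Rel' {Q : Type*} [CommRing Q] (y : Fin 5 → Q) (a : ℕ) : Prop where
  q : y 1 * y 4 = y 2 * y 3
  f : y 2 ^ (a + 1) = y 0 * y 3 ^ a
  g1 : ∀ i ≤ a, y 1 ^ (i + 1) * y 3 ^ (a + 1 - i) = y 0 * y 2 ^ i * y 4 ^ (a + 1 - i)
  g2 : ∀ j ≤ a, y 1 ^ (a + 2 - j) * y 2 ^ j = y 0 ^ 2 * y 3 ^ (a - j) * y 4 ^ j

lemma Rel'.g1' {Q : Type*} [CommRing Q] {y : Fin 5 → Q} {a : ℕ} (H : Rel' y a) (i : ℕ) (hi : i ≤ a + 1) :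
    y 1 ^ (i + 1) * y 3 ^ (a + 1 - i) = y 0 * y 2 ^ i * y 4 ^ (a + 1 - i) := by
  rcases Nat.lt_or_ge a i with h | h
  · obtain rfl : i = a + 1 := by omega
    have := H.g2 0 (by omega)
    have h2 := H.f
    simp only [Nat.sub_zero, pow_zero, mul_one, Nat.sub_self] at this ⊢
    rw [h2, this]; ring
  · exact H.g1 i h

lemma max_exists {Q : Type*} [CommRing Q] (y : Fin 5 → Q) (a : ℕ) (H : Rel' y a) :
    ∀ V e0 e1 e2 e3 e4 : ℕ, e1 + e2 + e3 + e4 = V → ∃ f0 f1 f2 f3 f4 : ℕ,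
      mon y e0 e1 e2 e3 e4 = mon y f0 f1 f2 f3 f4 ∧
      e0 + e1 + e2 + e3 + e4 = f0 + f1 + f2 + f3 + f4 ∧
      (a + 1) * e0 + e1 + e2 = (a + 1) * f0 + f1 + f2 ∧
      (a + 1) * e0 + e2 + e4 = (a + 1) * f0 + f2 + f4 ∧
      (f1 + f2 < a + 1 ∨ f2 + f4 < a + 1) := by
  intro V
  induction V with
  | zero =>
    intro e0 e1 e2 e3 e4 hV
    exact ⟨e0, e1, e2, e3, e4, rfl, rfl, rfl, rfl, by omega⟩
  | succ V ih =>
    intro e0 e1 e2 e3 e4 hV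
    by_cases hm : e1 + e2 < a + 1 ∨ e2 + e4 < a + 1
    · exact ⟨e0, e1, e2, e3, e4, rfl, rfl, rfl, rfl, hm⟩
    · push Not at hm
      obtain ⟨h1, h2⟩ := hm
      obtain ⟨P, hP⟩ := Nat.exists_eq_add_of_le h1
      obtain ⟨D, hD⟩ := Nat.exists_eq_add_of_le h2
      obtain ⟨u, hu⟩ : ∃ u, u = P + D - V := ⟨_, rfl⟩
      obtain ⟨f0, f1, f2, f3, f4, k0, k1, k2, k3, k4⟩ := ih (e0 + 1) (P - u) u (V + u - P - D) (D - u) (by omega)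
      refine ⟨f0, f1, f2, f3, f4, ?_, by omega, ?_, ?_, k4⟩
      · rw [← k0]
        apply theta_eq y a H.q H.f
        · omega
        · rw [mul_add]; omega
        · rw [mul_add]; omega
      · rw [← k2, mul_add]; omega
      · rw [← k3, mul_add]; omega

lemma step {Q : Type*} [CommRing Q] (y : Fin 5 → Q) (a : ℕ) (H : Rel' y a)
    (HF : y 3 ^ (2 * (a + 1)) = y 2 ^ a * y 4 ^ (a + 2)) {e0 e1 e2 e3 e4 : ℕ}
    (h : (1 ≤ e1 + e2 ∧ a + 2 + (e2 + e4) ≤ e1 + e2 + e3 + e4) ∨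
    (a + 2 ≤ e1 + e2 ∧ 2 + (e2 + e4) ≤ e1 + e2 + e3 + e4) ∨
    (e1 + e2 + 2 * (a + 1) ≤ e1 + e2 + e3 + e4 ∧ e2 + e4 + 2 * (a + 1) ≤ e1 + e2 + e3 + e4)) :
    ∃ f0 f1 f2 f3 f4 : ℕ,
      mon y e0 e1 e2 e3 e4 = mon y f0 f1 f2 f3 f4 ∧
      e0 + e1 + e2 + e3 + e4 = f0 + f1 + f2 + f3 + f4 ∧
      (a + 1) * e0 + e1 + e2 + a = (a + 1) * f0 + f1 + f2 ∧
      (a + 1) * e0 + e2 + e4 + 2 * (a + 1) = (a + 1) * f0 + f2 + f4 := by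
  rcases h with ⟨h1, h2⟩ | ⟨h1, h2⟩ | ⟨h1, h2⟩
  · obtain ⟨V, hV⟩ := Nat.exists_eq_add_of_le (show a + 2 ≤ e1 + e2 + e3 + e4 by omega)
    obtain ⟨i, hi⟩ : ∃ i, i = e1 + e2 - 1 - V := ⟨_, rfl⟩
    have hia : i ≤ a + 1 := by omega
    obtain ⟨P, hP⟩ := Nat.exists_eq_add_of_le (show i + 1 ≤ e1 + e2 by omega)
    obtain ⟨u, hu⟩ : ∃ u, u = P + (e2 + e4) - V := ⟨_, rfl⟩
    refine ⟨e0 + 1, P - u, u + i, V + u - P - (e2 + e4), e2 + e4 - u + (a + 1 - i), ?_, by omega,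
      by rw [mul_add (a + 1) e0 1]; omega, by rw [mul_add (a + 1) e0 1]; omega⟩
    rw [segre y H.q (f1 := P - u + (i + 1)) (f2 := u) (f3 := V + u - P - (e2 + e4) + (a + 1 - i))
      (f4 := e2 + e4 - u) (by omega) (by omega) (by omega)]
    have := H.g1' i hia
    have e := pow_add (y 1) (P - u) (i + 1)
    simp only [mon, e, pow_add _ _ (a + 1 - i), pow_add _ u i, pow_one, pow_add _ e0 1]
    linear_combination (y 0 ^ e0 * y 1 ^ (P - u) * y 2 ^ u * y 3 ^ (V + u - P - (e2 + e4)) * y 4 ^ (e2 + e4 - u)) * this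
  · obtain ⟨V, hV⟩ := Nat.exists_eq_add_of_le (show a + 2 ≤ e1 + e2 + e3 + e4 by omega)
    obtain ⟨j, hj⟩ : ∃ j, j = e2 + e4 - V := ⟨_, rfl⟩
    have hja : j ≤ a := by omega
    obtain ⟨P, hP⟩ := Nat.exists_eq_add_of_le h1
    obtain ⟨D, hD⟩ := Nat.exists_eq_add_of_le (show j ≤ e2 + e4 by omega)
    obtain ⟨u, hu⟩ : ∃ u, u = P + D - V := ⟨_, rfl⟩
    refine ⟨e0 + 2, P - u, u, V + u - P - D + (a - j), D - u + j, ?_, by omega,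
      by rw [mul_add (a + 1) e0 2]; omega, by rw [mul_add (a + 1) e0 2]; omega⟩
    rw [segre y H.q (f1 := P - u + (a + 2 - j)) (f2 := u + j) (f3 := V + u - P - D)
      (f4 := D - u) (by omega) (by omega) (by omega)]
    have := H.g2 j hja
    simp only [mon, pow_add _ _ (a + 2 - j), pow_add _ _ (a - j), pow_add _ u j, pow_add _ (D - u) j, pow_add _ e0 2]
    linear_combination (y 0 ^ e0 * y 1 ^ (P - u) * y 2 ^ u * y 3 ^ (V + u - P - D) * y 4 ^ (D - u)) * this
  · obtain ⟨V, hV⟩ := Nat.exists_eq_add_of_le (show 2 * (a + 1) ≤ e1 + e2 + e3 + e4 by omega)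
    obtain ⟨u, hu⟩ : ∃ u, u = (e1 + e2) + (e2 + e4) - V := ⟨_, rfl⟩
    refine ⟨e0, e1 + e2 - u, u + a, V + u - (e1 + e2) - (e2 + e4), e2 + e4 - u + (a + 2), ?_, by omega,
      by omega, by omega⟩
    rw [segre y H.q (f1 := e1 + e2 - u) (f2 := u) (f3 := V + u - (e1 + e2) - (e2 + e4) + 2 * (a + 1))
      (f4 := e2 + e4 - u) (by omega) (by omega) (by omega)]
    simp only [mon, pow_add _ _ (2 * (a + 1)), pow_add _ u a, pow_add _ _ (a + 2)]
    linear_combination (y 0 ^ e0 * y 1 ^ (e1 + e2 - u) * y 2 ^ u * y 3 ^ (V + u - (e1 + e2) - (e2 + e4)) * y 4 ^ (e2 + e4 - u)) * HF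

lemma full_aux {Q : Type*} [CommRing Q] (y : Fin 5 → Q) (a : ℕ) (ha : 1 ≤ a) (H : Rel' y a)
    (HF : y 3 ^ (2 * (a + 1)) = y 2 ^ a * y 4 ^ (a + 2)) {f0 f1 f2 f3 f4 : ℕ} :
    ∀ t e0 e1 e2 e3 e4 : ℕ, e0 + e1 + e2 + e3 + e4 = f0 + f1 + f2 + f3 + f4 →
    (a + 1) * e0 + e1 + e2 + t * a = (a + 1) * f0 + f1 + f2 →
    (a + 1) * e0 + e2 + e4 + t * (2 * (a + 1)) = (a + 1) * f0 + f2 + f4 →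
    mon y e0 e1 e2 e3 e4 = mon y f0 f1 f2 f3 f4 := by
  intro t
  induction t with
  | zero =>
    intro e0 e1 e2 e3 e4 hW hP hD
    exact theta_eq y a H.q H.f hW (by simpa using hP) (by simpa using hD)
  | succ t ih =>
    intro e0 e1 e2 e3 e4 hW hP hD
    obtain ⟨c0, c1, c2, c3, c4, k0, k1, k2, k3, k4⟩ := max_exists y a H _ e0 e1 e2 e3 e4 rfl
    rw [k0]
    rw [k1] at hW
    rw [k2] at hP
    rw [k3] at hD
    obtain ⟨d0, d1, d2, d3, d4, l0, l1, l2, l3⟩ := step y a H HF (e0 := c0)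
      (step_exists a ha (by omega) hW hP hD k4)
    rw [l0]
    apply ih
    · omega
    · rw [← l2, ← hP]; ring
    · rw [← l3, ← hD]; ring

/-- monomials of the same bidegree agree modulo the relations -/
lemma full_eq {Q : Type*} [CommRing Q] (y : Fin 5 → Q) (a : ℕ) (ha : 1 ≤ a) (H : Rel' y a)
    (HF : y 3 ^ (2 * (a + 1)) = y 2 ^ a * y 4 ^ (a + 2)) (hc : Nat.Coprime a (2 * (a + 1)))
    {e0 e1 e2 e3 e4 f0 f1 f2 f3 f4 : ℕ} (hW : e0 + e1 + e2 + e3 + e4 = f0 + f1 + f2 + f3 + f4)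
    (hw : a * (a + 1) * e1 + a * (a + 2) * e2 + (a + 1) * (a + 2) * e3 + ((a + 1) * (a + 2) + a) * e4 =
      a * (a + 1) * f1 + a * (a + 2) * f2 + (a + 1) * (a + 2) * f3 + ((a + 1) * (a + 2) + a) * f4) :
    mon y e0 e1 e2 e3 e4 = mon y f0 f1 f2 f3 f4 := by
  have key : (2 * ((a : ℤ) + 1)) * (((a + 1) * f0 + f1 + f2) - ((a + 1) * e0 + e1 + e2)) =
      a * (((a + 1) * f0 + f2 + f4) - ((a + 1) * e0 + e2 + e4)) := by
    zify at hW hw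
    linear_combination hw - ((a : ℤ) + 1) * (a + 2) * hW
  have hc' : IsCoprime (a : ℤ) (2 * ((a : ℤ) + 1)) := by
    have := Nat.isCoprime_iff_coprime.2 hc
    simpa using this
  obtain ⟨t, ht⟩ : (a : ℤ) ∣ (((a + 1) * f0 + f1 + f2) - ((a + 1) * e0 + e1 + e2)) :=
    hc'.dvd_of_dvd_mul_left ⟨_, key⟩
  have hDt : (((a : ℤ) + 1) * f0 + f2 + f4) - ((a + 1) * e0 + e2 + e4) = 2 * (a + 1) * t := by
    have ha' : (a : ℤ) ≠ 0 := by positivity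
    apply mul_left_cancel₀ ha'
    rw [← key, ht]; ring
  rcases le_total 0 t with h | h
  · lift t to ℕ using h
    apply full_aux y a ha H HF t _ _ _ _ _ hW
    · zify; linarith
    · zify; linarith
  · obtain ⟨u, rfl⟩ : ∃ u : ℤ, t = -u := ⟨-t, by ring⟩
    have h' : 0 ≤ u := by linarith
    lift u to ℕ using h'
    symm
    apply full_aux y a ha H HF u _ _ _ _ _ hW.symm
    · zify; linarith
    · zify; linarith

end monomials
end Bres

namespace Bres

section modcong

variable {R M : Type*} [CommRing R] [AddCommGroup M] [Module R M]

/-- relations given by the columns of `ψ` -/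
structure RelPsi (y : Fin 5 → R) (ε : ℕ → M) (a : ℕ) : Prop where
  r0 : y 0 • ε 0 = y 4 • ε (2 * a + 1)
  r1 : ∀ i < a + 1, y 3 • ε (i + 1) = y 1 • ε i
  r2 : ∀ i, a + 1 ≤ i → i < 2 * a + 1 → y 3 • ε (i + 1) = y 4 • ε i

/-- relations given by the columns of `φ` -/
structure RelPhi (y : Fin 5 → R) (ε : ℕ → M) (a : ℕ) : Prop where
  r1 : ∀ i < a + 1, y 2 • ε i = y 4 • ε (i + 1)
  r2 : ∀ i, a + 1 ≤ i → i < 2 * a + 1 → y 2 • ε i = y 1 • ε (i + 1)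
  r3 : y 2 • ε (2 * a + 1) = y 0 • ε 1

lemma psi_nf (y : Fin 5 → R) (ε : ℕ → M) (a : ℕ) (H : RelPsi y ε a) :
    ∀ N e0 e1 e2 e3 e4 i : ℕ, e0 + e3 = N → i ≤ 2 * a + 1 → ∃ f0 f1 f3 f4 j : ℕ,
      j ≤ 2 * a + 1 ∧ mon y e0 e1 e2 e3 e4 • ε i = mon y f0 f1 e2 f3 f4 • ε j ∧
      e0 + e1 + e3 + e4 = f0 + f1 + f3 + f4 ∧
      (a + 1) * e0 + e1 + min i (a + 1) = (a + 1) * f0 + f1 + min j (a + 1) ∧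
      (a + 1) * e0 + e4 + (i - (a + 1)) = (a + 1) * f0 + f4 + (j - (a + 1)) ∧
      ((j = 0 ∧ f0 = 0) ∨ (1 ≤ j ∧ f3 = 0)) := by
  intro N
  induction N with
  | zero =>
    intro e0 e1 e2 e3 e4 i hN hi
    exact ⟨e0, e1, e3, e4, i, hi, rfl, rfl, rfl, rfl, by omega⟩
  | succ N ih =>
    intro e0 e1 e2 e3 e4 i hN hi
    by_cases hnf : (i = 0 ∧ e0 = 0) ∨ (1 ≤ i ∧ e3 = 0)
    · exact ⟨e0, e1, e3, e4, i, hi, rfl, rfl, rfl, rfl, hnf⟩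
    rcases Nat.eq_zero_or_pos i with rfl | hi0
    · obtain ⟨e, rfl⟩ : ∃ e, e0 = e + 1 := ⟨e0 - 1, by omega⟩
      obtain ⟨f0, f1, f3, f4, j, k0, k1, k2, k3, k4, k5⟩ :=
        ih e e1 e2 e3 (e4 + 1) (2 * a + 1) (by omega) le_rfl
      refine ⟨f0, f1, f3, f4, j, k0, ?_, by omega, ?_, ?_, k5⟩
      · rw [← k1]
        have h1 : mon y (e + 1) e1 e2 e3 e4 = mon y e e1 e2 e3 e4 * y 0 := by simp only [mon]; ring
        have h2 : mon y e e1 e2 e3 (e4 + 1) = mon y e e1 e2 e3 e4 * y 4 := by simp only [mon]; ring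
        rw [h1, h2, mul_smul, mul_smul, H.r0]
      · rw [← k3, mul_add]; omega
      · rw [← k4, mul_add]; omega
    · obtain ⟨e, rfl⟩ : ∃ e, e3 = e + 1 := ⟨e3 - 1, by omega⟩
      obtain ⟨i, rfl⟩ : ∃ i', i = i' + 1 := ⟨i - 1, by omega⟩
      have h1 : mon y e0 e1 e2 (e + 1) e4 = mon y e0 e1 e2 e e4 * y 3 := by simp only [mon]; ring
      by_cases hib : i < a + 1
      · obtain ⟨f0, f1, f3, f4, j, k0, k1, k2, k3, k4, k5⟩ :=
          ih e0 (e1 + 1) e2 e e4 i (by omega) (by omega)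
        refine ⟨f0, f1, f3, f4, j, k0, ?_, by omega, by omega, by omega, k5⟩
        rw [← k1]
        have h2 : mon y e0 (e1 + 1) e2 e e4 = mon y e0 e1 e2 e e4 * y 1 := by simp only [mon]; ring
        rw [h1, h2, mul_smul, mul_smul, H.r1 i hib]
      · obtain ⟨f0, f1, f3, f4, j, k0, k1, k2, k3, k4, k5⟩ :=
          ih e0 e1 e2 e (e4 + 1) i (by omega) (by omega)
        refine ⟨f0, f1, f3, f4, j, k0, ?_, by omega, by omega, by omega, k5⟩
        rw [← k1]
        have h2 : mon y e0 e1 e2 e (e4 + 1) = mon y e0 e1 e2 e e4 * y 4 := by simp only [mon]; ring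
        rw [h1, h2, mul_smul, mul_smul, H.r2 i (by omega) (by omega)]

lemma euclid_unique (l e f i j : ℕ) (hi : 1 ≤ i) (hi' : i ≤ l) (hj : 1 ≤ j) (hj' : j ≤ l)
    (h : l * e + i = l * f + j) : e = f := by
  rcases lt_trichotomy e f with h1 | h1 | h1
  · have : l * (e + 1) ≤ l * f := Nat.mul_le_mul_left l h1
    rw [mul_add] at this; omega
  · exact h1
  · have : l * (f + 1) ≤ l * e := Nat.mul_le_mul_left l h1
    rw [mul_add] at this; omega

lemma psi_eq (y : Fin 5 → R) (ε : ℕ → M) (a : ℕ) (H : RelPsi y ε a)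
    {e0 e1 e2 e3 e4 i f0 f1 f3 f4 j : ℕ} (hi : i ≤ 2 * a + 1) (hj : j ≤ 2 * a + 1)
    (hW : e0 + e1 + e3 + e4 = f0 + f1 + f3 + f4)
    (hP : (a + 1) * e0 + e1 + min i (a + 1) = (a + 1) * f0 + f1 + min j (a + 1))
    (hD : (a + 1) * e0 + e4 + (i - (a + 1)) = (a + 1) * f0 + f4 + (j - (a + 1))) :
    mon y e0 e1 e2 e3 e4 • ε i = mon y f0 f1 e2 f3 f4 • ε j := by
  obtain ⟨c0, c1, c3, c4, i', k0, k1, k2, k3, k4, k5⟩ := psi_nf y ε a H _ e0 e1 e2 e3 e4 i rfl hi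
  obtain ⟨d0, d1, d3, d4, j', l0, l1, l2, l3, l4, l5⟩ := psi_nf y ε a H _ f0 f1 e2 f3 f4 j rfl hj
  rw [k1, l1]
  rw [k2, l2] at hW
  rw [k3, l3] at hP
  rw [k4, l4] at hD
  clear k1 k2 k3 k4 l1 l2 l3 l4 hi hj
  have key : (2 * a + 1) * c0 + i' + d3 = (2 * a + 1) * d0 + j' + c3 := by
    have e1 : (2 * a + 1) * c0 + c0 = (a + 1) * c0 + (a + 1) * c0 := by ring
    have e2 : (2 * a + 1) * d0 + d0 = (a + 1) * d0 + (a + 1) * d0 := by ring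
    omega
  have h0 : c0 = d0 := by
    rcases k5 with ⟨h1, h2⟩ | ⟨h1, h2⟩ <;> rcases l5 with ⟨h3, h4⟩ | ⟨h3, h4⟩
    · omega
    · subst h2 h1 h4; rw [mul_zero] at key; omega
    · subst h2 h3 h4; rw [mul_zero] at key; omega
    · apply euclid_unique (2 * a + 1) c0 d0 i' j' <;> omega
  subst h0
  have hij : i' = j' := by omega
  subst hij
  rw [mon_congr y (rfl : c0 = c0) (show c1 = d1 by omega) (rfl : e2 = e2) (show c3 = d3 by omega)
    (show c4 = d4 by omega)]

lemma phi_elim (y : Fin 5 → R) (ε : ℕ → M) (a : ℕ) (H : RelPhi y ε a) :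
    ∀ e2 e0 e1 e3 e4 i : ℕ, i ≤ 2 * a + 1 → ∃ f0 f1 f3 f4 j : ℕ,
      j ≤ 2 * a + 1 ∧ mon y e0 e1 e2 e3 e4 • ε i = mon y f0 f1 0 f3 f4 • ε j ∧
      e0 + e1 + e2 + e3 + e4 = f0 + f1 + f3 + f4 ∧
      (a + 1) * e0 + e1 + e2 + min i (a + 1) = (a + 1) * f0 + f1 + min j (a + 1) ∧
      (a + 1) * e0 + e2 + e4 + (i - (a + 1)) = (a + 1) * f0 + f4 + (j - (a + 1)) := by
  intro e
  induction e with
  | zero =>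
    intro e0 e1 e3 e4 i hi
    exact ⟨e0, e1, e3, e4, i, hi, rfl, rfl, rfl, rfl⟩
  | succ e ih =>
    intro e0 e1 e3 e4 i hi
    have h1 : mon y e0 e1 (e + 1) e3 e4 = mon y e0 e1 e e3 e4 * y 2 := by simp only [mon]; ring
    by_cases hib : i < a + 1
    · obtain ⟨f0, f1, f3, f4, j, k0, k1, k2, k3, k4⟩ := ih e0 e1 e3 (e4 + 1) (i + 1) (by omega)
      refine ⟨f0, f1, f3, f4, j, k0, ?_, by omega, by omega, by omega⟩
      rw [← k1]
      have h2 : mon y e0 e1 e e3 (e4 + 1) = mon y e0 e1 e e3 e4 * y 4 := by simp only [mon]; ring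
      rw [h1, h2, mul_smul, mul_smul, H.r1 i hib]
    · by_cases hil : i < 2 * a + 1
      · obtain ⟨f0, f1, f3, f4, j, k0, k1, k2, k3, k4⟩ := ih e0 (e1 + 1) e3 e4 (i + 1) (by omega)
        refine ⟨f0, f1, f3, f4, j, k0, ?_, by omega, by omega, by omega⟩
        rw [← k1]
        have h2 : mon y e0 (e1 + 1) e e3 e4 = mon y e0 e1 e e3 e4 * y 1 := by simp only [mon]; ring
        rw [h1, h2, mul_smul, mul_smul, H.r2 i (by omega) hil]
      · obtain rfl : i = 2 * a + 1 := by omega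
        obtain ⟨f0, f1, f3, f4, j, k0, k1, k2, k3, k4⟩ := ih (e0 + 1) e1 e3 e4 1 (by omega)
        rw [mul_add] at k3 k4
        refine ⟨f0, f1, f3, f4, j, k0, ?_, by omega, by omega, by omega⟩
        rw [← k1]
        have h2 : mon y (e0 + 1) e1 e e3 e4 = mon y e0 e1 e e3 e4 * y 0 := by simp only [mon]; ring
        rw [h1, h2, mul_smul, mul_smul, H.r3]

lemma phi_eq (y : Fin 5 → R) (ε : ℕ → M) (a : ℕ) (H : RelPsi y ε a) (H' : RelPhi y ε a)
    {e0 e1 e2 e3 e4 i f0 f1 f2 f3 f4 j : ℕ} (hi : i ≤ 2 * a + 1) (hj : j ≤ 2 * a + 1)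
    (hW : e0 + e1 + e2 + e3 + e4 = f0 + f1 + f2 + f3 + f4)
    (hP : (a + 1) * e0 + e1 + e2 + min i (a + 1) = (a + 1) * f0 + f1 + f2 + min j (a + 1))
    (hD : (a + 1) * e0 + e2 + e4 + (i - (a + 1)) = (a + 1) * f0 + f2 + f4 + (j - (a + 1))) :
    mon y e0 e1 e2 e3 e4 • ε i = mon y f0 f1 f2 f3 f4 • ε j := by
  obtain ⟨c0, c1, c3, c4, i', k0, k1, k2, k3, k4⟩ := phi_elim y ε a H' e2 e0 e1 e3 e4 i hi
  obtain ⟨d0, d1, d3, d4, j', l0, l1, l2, l3, l4⟩ := phi_elim y ε a H' f2 f0 f1 f3 f4 j hj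
  rw [k1, l1]
  apply psi_eq y ε a H k0 l0 <;> omega

end modcong
end Bres

namespace Bres

section columns
variable {k : Type*} [Field k]

/-- standard basis vectors, indexed by naturals -/
noncomputable def ev (k : Type*) [Field k] (a i : ℕ) : Fin (2 * a + 2) → RR k := Pi.single (Fin.ofNat (2 * a + 2) i) 1

/-- columns of `ψ` -/
noncomputable def cpsi (k : Type*) [Field k] (a : ℕ) (j : Fin (2 * a + 2)) : Fin (2 * a + 2) → RR k :=
  if j.val = 0 then (X 0 : RR k) • ev k a 0 - (X 4 : RR k) • ev k a (2 * a + 1)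
  else if j.val ≤ a + 1 then (X 3 : RR k) • ev k a j - (X 1 : RR k) • ev k a (j - 1)
  else (X 3 : RR k) • ev k a j - (X 4 : RR k) • ev k a (j - 1)

/-- columns of `φ` -/
noncomputable def cphi (k : Type*) [Field k] (a : ℕ) (j : Fin (2 * a + 2)) : Fin (2 * a + 2) → RR k :=
  if j.val < a + 1 then (X 2 : RR k) • ev k a j - (X 4 : RR k) • ev k a (j + 1)
  else if j.val < 2 * a + 1 then (X 2 : RR k) • ev k a j - (X 1 : RR k) • ev k a (j + 1)
  else (X 2 : RR k) • ev k a j - (X 0 : RR k) • ev k a 1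

lemma hom_ev (a i : ℕ) (t : Fin 5) (j : Fin (2 * a + 2)) :
    (((X t : RR k) • ev k a i) j).IsHomogeneous 1 := by
  simp only [ev, Pi.smul_apply, smul_eq_mul]
  by_cases h : j = Fin.ofNat (2 * a + 2) i
  · rw [h, Pi.single_eq_same, mul_one]; exact isHomogeneous_X _ _
  · rw [Pi.single_eq_of_ne h, mul_zero]; exact isHomogeneous_zero _ _ _

lemma hom_cpsi (a : ℕ) (j i : Fin (2 * a + 2)) : (cpsi k a j i).IsHomogeneous 1 := by
  unfold cpsi
  split_ifs <;> exact (hom_ev _ _ _ _).sub (hom_ev _ _ _ _)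

lemma hom_cphi (a : ℕ) (j i : Fin (2 * a + 2)) : (cphi k a j i).IsHomogeneous 1 := by
  unfold cphi
  split_ifs <;> exact (hom_ev _ _ _ _).sub (hom_ev _ _ _ _)

lemma smul_mkQ_eq {n : ℕ} (K : Submodule (RR k) (Fin n → RR k)) {r s : RR k} {v w : Fin n → RR k}
    (h : r • v - s • w ∈ K) : r • K.mkQ v = s • K.mkQ w := by
  rw [← map_smul, ← map_smul, ← sub_eq_zero, ← map_sub, Submodule.mkQ_apply,
    Submodule.Quotient.mk_eq_zero]
  exact h

lemma relPsi (a : ℕ) (K : Submodule (RR k) (Fin (2 * a + 2) → RR k)) (hK : ∀ j, cpsi k a j ∈ K) :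
    RelPsi (X : Fin 5 → RR k) (fun i => K.mkQ (ev k a i)) a := by
  refine ⟨?_, ?_, ?_⟩
  · apply smul_mkQ_eq
    simpa [cpsi] using hK 0
  · intro i hi
    apply smul_mkQ_eq
    have := hK ⟨i + 1, by omega⟩
    rw [cpsi, if_neg (by simp), if_pos (by dsimp only; omega)] at this
    simpa using this
  · intro i hi hi'
    apply smul_mkQ_eq
    have := hK ⟨i + 1, by omega⟩
    rw [cpsi, if_neg (by simp), if_neg (by dsimp only; omega)] at this
    simpa using this

lemma relPhi (a : ℕ) (K : Submodule (RR k) (Fin (2 * a + 2) → RR k)) (hK : ∀ j, cphi k a j ∈ K) :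
    RelPhi (X : Fin 5 → RR k) (fun i => K.mkQ (ev k a i)) a := by
  refine ⟨?_, ?_, ?_⟩
  · intro i hi
    apply smul_mkQ_eq
    have := hK ⟨i, by omega⟩
    rwa [cphi, if_pos (by dsimp only; omega)] at this
  · intro i hi hi'
    apply smul_mkQ_eq
    have := hK ⟨i, by omega⟩
    rwa [cphi, if_neg (by dsimp only; omega), if_pos (by dsimp only; omega)] at this
  · apply smul_mkQ_eq
    have := hK ⟨2 * a + 1, by omega⟩
    rwa [cphi, if_neg (by dsimp only; omega), if_neg (by dsimp only; omega)] at this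

/-- target weights -/
noncomputable def mmN (k : Type*) [Field k] (a i : ℕ) : MvPolynomial (Fin 4) k :=
  X 1 ^ min i (a + 1) * X 2 ^ (i - (a + 1))

/-- the parametrisation with `x₂` free -/
noncomputable def gt (k : Type*) [Field k] (a : ℕ) : Fin 5 → MvPolynomial (Fin 4) k :=
  ![X 0 * X 1 ^ (a + 1) * X 2 ^ (a + 1), X 0 * X 1, X 3, X 0, X 0 * X 2]

/-- the parametrisation of the surface -/
noncomputable def gth (k : Type*) [Field k] (a : ℕ) : Fin 5 → MvPolynomial (Fin 4) k :=
  ![X 0 * X 1 ^ (a + 1) * X 2 ^ (a + 1), X 0 * X 1, X 0 * X 1 * X 2, X 0, X 0 * X 2]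

/-- the parametrisation of the cone over the quadric -/
noncomputable def gs (k : Type*) [Field k] : Fin 5 → MvPolynomial (Fin 4) k :=
  ![X 3, X 0 * X 1, X 0 * X 1 * X 2, X 0, X 0 * X 2]

lemma tau_ev (g : Fin 5 → MvPolynomial (Fin 4) k) (a i : ℕ) (hi : i < 2 * a + 2) (t : Fin 5) :
    tau g (fun j : Fin (2 * a + 2) => mmN k a j) ((X t : RR k) • ev k a i) = g t * mmN k a i := by
  rw [tau_smul, ev, tau_single, map_one, one_mul, aeval_X, Fin.val_ofNat, Nat.mod_eq_of_lt hi]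

lemma tau_cpsi (g : Fin 5 → MvPolynomial (Fin 4) k) (a : ℕ)
    (h0 : g 0 = X 0 * X 1 ^ (a + 1) * X 2 ^ (a + 1)) (h1 : g 1 = X 0 * X 1) (h3 : g 3 = X 0)
    (h4 : g 4 = X 0 * X 2) (j : Fin (2 * a + 2)) :
    tau g (fun j : Fin (2 * a + 2) => mmN k a j) (cpsi k a j) = 0 := by
  obtain ⟨j, hj⟩ := j
  unfold cpsi
  dsimp only
  split_ifs with c1 c2
  · rw [map_sub, tau_ev _ _ _ (by omega), tau_ev _ _ _ (by omega), h0, h4]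
    simp only [mmN]
    rw [show min (2 * a + 1) (a + 1) = a + 1 by omega, show 2 * a + 1 - (a + 1) = a by omega]
    simp; ring
  · obtain ⟨i, rfl⟩ : ∃ i, j = i + 1 := ⟨j - 1, by omega⟩
    rw [map_sub, tau_ev _ _ _ (by omega), tau_ev _ _ _ (by omega), h1, h3]
    simp only [mmN]
    rw [show min (i + 1) (a + 1) = i + 1 by omega, show i + 1 - (a + 1) = 0 by omega,
      show min (i + 1 - 1) (a + 1) = i by omega, show i + 1 - 1 - (a + 1) = 0 by omega]
    ring
  · obtain ⟨i, rfl⟩ : ∃ i, j = a + 1 + i + 1 := ⟨j - a - 2, by omega⟩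
    rw [map_sub, tau_ev _ _ _ (by omega), tau_ev _ _ _ (by omega), h3, h4]
    simp only [mmN]
    rw [show min (a + 1 + i + 1) (a + 1) = a + 1 by omega, show a + 1 + i + 1 - (a + 1) = i + 1 by omega,
      show min (a + 1 + i + 1 - 1) (a + 1) = a + 1 by omega,
      show a + 1 + i + 1 - 1 - (a + 1) = i by omega]
    ring

lemma tau_cphi (g : Fin 5 → MvPolynomial (Fin 4) k) (a : ℕ)
    (h0 : g 0 = X 0 * X 1 ^ (a + 1) * X 2 ^ (a + 1)) (h1 : g 1 = X 0 * X 1)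
    (h4 : g 4 = X 0 * X 2) (j : Fin (2 * a + 2)) :
    tau g (fun j : Fin (2 * a + 2) => mmN k a j) (cphi k a j) = (g 2 - X 0 * X 1 * X 2) * mmN k a j := by
  obtain ⟨j, hj⟩ := j
  unfold cphi
  dsimp only
  split_ifs with c1 c2
  · rw [map_sub, tau_ev _ _ _ (by omega), tau_ev _ _ _ (by omega), h4]
    simp only [mmN]
    rw [show min (j + 1) (a + 1) = j + 1 by omega, show j + 1 - (a + 1) = 0 by omega,
      show min j (a + 1) = j by omega, show j - (a + 1) = 0 by omega]
    ring
  · obtain ⟨i, rfl⟩ : ∃ i, j = a + 1 + i := ⟨j - a - 1, by omega⟩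
    rw [map_sub, tau_ev _ _ _ (by omega), tau_ev _ _ _ (by omega), h1]
    simp only [mmN]
    rw [show min (a + 1 + i + 1) (a + 1) = a + 1 by omega, show a + 1 + i + 1 - (a + 1) = i + 1 by omega,
      show min (a + 1 + i) (a + 1) = a + 1 by omega,
      show a + 1 + i - (a + 1) = i by omega]
    ring
  · obtain rfl : j = 2 * a + 1 := by omega
    rw [map_sub, tau_ev _ _ _ (by omega), tau_ev _ _ _ (by omega), h0]
    simp only [mmN]
    rw [show min (2 * a + 1) (a + 1) = a + 1 by omega, show 2 * a + 1 - (a + 1) = a by omega,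
      show min 1 (a + 1) = 1 by omega, show 1 - (a + 1) = 0 by omega]
    ring

lemma tau_span (g : Fin 5 → MvPolynomial (Fin 4) k) (a : ℕ) {κ : Type} (c : κ → Fin (2 * a + 2) → RR k)
    (h : ∀ j, tau g (fun j : Fin (2 * a + 2) => mmN k a j) (c j) = 0) (x)
    (hx : x ∈ Submodule.span (RR k) (Set.range c)) :
    tau g (fun j : Fin (2 * a + 2) => mmN k a j) x = 0 := by
  induction hx using Submodule.span_induction with
  | mem x hx => obtain ⟨j, rfl⟩ := hx; exact h j
  | zero => simp
  | add x y _ _ hx hy => rw [map_add, hx, hy, add_zero]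
  | smul r x _ hx => rw [tau_smul, hx, mul_zero]

lemma prod5 {S : Type*} [CommRing S] (y : Fin 5 → S) (m : Fin 5 → ℕ) :
    ∏ i, y i ^ m i = mon y (m 0) (m 1) (m 2) (m 3) (m 4) := by
  simp [Fin.prod_univ_succ, mon]; ring

lemma psi_ker (a : ℕ) (x : Fin (2 * a + 2) → RR k) :
    tau (gt k a) (fun j : Fin (2 * a + 2) => mmN k a j) x = 0 ↔
      x ∈ Submodule.span (RR k) (Set.range (cpsi k a)) := by
  constructor
  · refine mod_toric (gt k a) _ (fun m i => ![m 0 + m 1 + m 3 + m 4,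
      (a + 1) * m 0 + m 1 + min i.val (a + 1), (a + 1) * m 0 + m 4 + (i.val - (a + 1)), m 2]) ?_ _ ?_ x
    · intro m i
      rw [prod5, Fin.prod_univ_four]
      simp [mon, gt, mmN]
      ring
    · intro m m' i i' h
      have e0 := congrFun h 0
      have e1 := congrFun h 1
      have e2 := congrFun h 2
      have e3 := congrFun h 3
      simp at e0 e1 e2 e3
      have H := relPsi a (Submodule.span (RR k) (Set.range (cpsi k a))) (fun j => Submodule.subset_span ⟨j, rfl⟩)
      have := psi_eq (e2 := m 2) _ _ a H (i := i.val) (j := i'.val) (by omega) (by omega) e0 e1 e2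
      rw [prod5, prod5, ← e3]
      simpa [ev] using this
  · exact tau_span _ a _ (tau_cpsi _ a rfl rfl rfl rfl) x

lemma phi_ker (a : ℕ) (x : Fin (2 * a + 2) → RR k) :
    tau (gth k a) (fun j : Fin (2 * a + 2) => mmN k a j) x = 0 ↔
      x ∈ Submodule.span (RR k) (Set.range (cpsi k a)) ⊔ Submodule.span (RR k) (Set.range (cphi k a)) := by
  rw [← Submodule.span_union, ← Set.Sum.elim_range]
  constructor
  · refine mod_toric (gth k a) _ (fun m i => ![m 0 + m 1 + m 2 + m 3 + m 4,
      (a + 1) * m 0 + m 1 + m 2 + min i.val (a + 1), (a + 1) * m 0 + m 2 + m 4 + (i.val - (a + 1)), 0]) ?_ _ ?_ x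
    · intro m i
      rw [prod5, Fin.prod_univ_four]
      simp [mon, gth, mmN]
      ring
    · intro m m' i i' h
      have e0 := congrFun h 0
      have e1 := congrFun h 1
      have e2 := congrFun h 2
      simp at e0 e1 e2
      have H := relPsi a (Submodule.span (RR k) (Set.range (Sum.elim (cpsi k a) (cphi k a))))
        (fun j => Submodule.subset_span ⟨.inl j, rfl⟩)
      have H' := relPhi a (Submodule.span (RR k) (Set.range (Sum.elim (cpsi k a) (cphi k a))))
        (fun j => Submodule.subset_span ⟨.inr j, rfl⟩)
      have := phi_eq _ _ a H H' (i := i.val) (j := i'.val) (by omega) (by omega) e0 e1 e2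
      rw [prod5, prod5]
      simpa [ev] using this
  · apply tau_span
    rintro (j | j)
    · exact tau_cpsi _ a rfl rfl rfl rfl j
    · refine (tau_cphi _ a rfl rfl rfl j).trans ?_
      simp [gth]

lemma phi_psi (a : ℕ) (x : Fin (2 * a + 2) → RR k) :
    ∑ j, x j • cphi k a j ∈ Submodule.span (RR k) (Set.range (cpsi k a)) ↔
      x ∈ Submodule.span (RR k) (Set.range (cpsi k a)) := by
  rw [← psi_ker, ← psi_ker]
  have : tau (gt k a) (fun j : Fin (2 * a + 2) => mmN k a j) (∑ j, x j • cphi k a j) =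
      (X 3 - X 0 * X 1 * X 2) * tau (gt k a) (fun j : Fin (2 * a + 2) => mmN k a j) x := by
    rw [map_sum, tau_apply, Finset.mul_sum]
    refine Finset.sum_congr rfl fun j _ => ?_
    rw [tau_smul, tau_cphi _ a rfl rfl rfl]
    simp only [gt]
    simp; ring
  rw [this, mul_eq_zero, or_iff_right]
  intro h
  have := congrArg (aeval (R := k) (![0, 0, 0, 1] : Fin 4 → k)) h
  simp at this

lemma psi_inj (a : ℕ) (x : Fin (2 * a + 2) → RR k) (h : ∑ j, x j • cpsi k a j = 0) : x = 0 := by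
  set A : Matrix (Fin (2 * a + 2)) (Fin (2 * a + 2)) (RR k) := Matrix.of fun i j => cpsi k a j i with hA
  have hdet : A.det ≠ 0 := by
    intro h0
    have h1 := congrArg (aeval (R := k) (![1, 0, 0, 1, 0] : Fin 5 → k)) h0
    rw [map_zero, AlgHom.map_det] at h1
    have : (aeval (R := k) (![1, 0, 0, 1, 0] : Fin 5 → k)).mapMatrix A = 1 := by
      ext i ⟨j, hj⟩
      simp only [hA, AlgHom.mapMatrix_apply, Matrix.map_apply, Matrix.of_apply, Matrix.one_apply]
      have e3 : ∀ i', (aeval (R := k) (![1, 0, 0, 1, 0] : Fin 5 → k)) (ev k a i' i) =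
          if i = Fin.ofNat (2 * a + 2) i' then 1 else 0 := by
        intro i'
        by_cases hi : i = Fin.ofNat (2 * a + 2) i'
        · rw [if_pos hi, ev, hi, Pi.single_eq_same, map_one]
        · rw [if_neg hi, ev, Pi.single_eq_of_ne hi, map_zero]
      have e4 : Fin.ofNat (2 * a + 2) j = ⟨j, hj⟩ := Fin.ext (Nat.mod_eq_of_lt hj)
      unfold cpsi
      dsimp only
      split_ifs with c1 c2 c3 <;>
      simp only [Pi.sub_apply, Pi.smul_apply, smul_eq_mul, map_sub, map_mul, aeval_X, e3, e4] <;> simp_all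
    rw [this, Matrix.det_one] at h1
    exact one_ne_zero h1
  apply Matrix.eq_zero_of_mulVec_eq_zero hdet
  rw [← h]
  funext i
  simp [Matrix.mulVec, dotProduct, hA, mul_comm]

end columns
end Bres

namespace Bres

section ideals
variable {k : Type*} [Field k]

/-- the quadric -/
noncomputable def pq (k : Type*) [Field k] : RR k := X 1 * X 4 - X 2 * X 3
/-- the binomial cutting the surface -/
noncomputable def pf (k : Type*) [Field k] (a : ℕ) : RR k := X 2 ^ (a + 1) - X 0 * X 3 ^ a
/-- the family of generators -/
noncomputable def gen (k : Type*) [Field k] (a : ℕ) (j : Fin (2 * a + 2)) : RR k :=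
  if j.val ≤ a then X 1 ^ (j.val + 1) * X 3 ^ (a + 1 - j.val) - X 0 * X 2 ^ j.val * X 4 ^ (a + 1 - j.val)
  else X 1 ^ (a + 2 - (j.val - (a + 1))) * X 2 ^ (j.val - (a + 1)) -
    X 0 ^ 2 * X 3 ^ (a - (j.val - (a + 1))) * X 4 ^ (j.val - (a + 1))
/-- the last generator -/
noncomputable def pF (k : Type*) [Field k] (a : ℕ) : RR k := X 3 ^ (2 * (a + 1)) - X 2 ^ a * X 4 ^ (a + 2)

lemma hom_X (i : Fin 5) (e : ℕ) : ((X i : RR k) ^ e).IsHomogeneous e := by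
  simpa using (isHomogeneous_X k i).pow e

lemma hom_pq : (pq k).IsHomogeneous 2 :=
  ((isHomogeneous_X k 1).mul (isHomogeneous_X k 4)).sub ((isHomogeneous_X k 2).mul (isHomogeneous_X k 3))

lemma hom_pf (a : ℕ) : (pf k a).IsHomogeneous (a + 1) := by
  have h := (isHomogeneous_X k (0 : Fin 5)).mul (hom_X (k := k) 3 a)
  rw [add_comm] at h
  exact (hom_X 2 (a + 1)).sub h

lemma hom_pF (a : ℕ) : (pF k a).IsHomogeneous (2 * (a + 1)) := by
  have h := (hom_X (k := k) 2 a).mul (hom_X (k := k) 4 (a + 2))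
  rw [show a + (a + 2) = 2 * (a + 1) by ring] at h
  exact (hom_X 3 _).sub h

lemma hom_gen (a : ℕ) (j : Fin (2 * a + 2)) : (gen k a j).IsHomogeneous (a + 2) := by
  obtain ⟨j, hj⟩ := j
  unfold gen
  dsimp only
  split_ifs with c
  · have h1 := (hom_X (k := k) 1 (j + 1)).mul (hom_X (k := k) 3 (a + 1 - j))
    have h2 := ((isHomogeneous_X k (0 : Fin 5)).mul (hom_X (k := k) 2 j)).mul (hom_X (k := k) 4 (a + 1 - j))
    rw [show j + 1 + (a + 1 - j) = a + 2 by omega] at h1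
    rw [show 1 + j + (a + 1 - j) = a + 2 by omega] at h2
    exact h1.sub h2
  · obtain ⟨i, rfl⟩ : ∃ i, j = a + 1 + i := ⟨j - a - 1, by omega⟩
    rw [show a + 1 + i - (a + 1) = i by omega]
    have h1 := (hom_X (k := k) 1 (a + 2 - i)).mul (hom_X (k := k) 2 i)
    have h2 := ((hom_X (k := k) 0 2).mul (hom_X (k := k) 3 (a - i))).mul (hom_X (k := k) 4 i)
    rw [show a + 2 - i + i = a + 2 by omega] at h1
    rw [show 2 + (a - i) + i = a + 2 by omega] at h2
    exact h1.sub h2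

lemma rel_iff {Q : Type*} [CommRing Q] (f : RR k →+* Q) (a : ℕ) :
    Rel' (fun i => f (X i)) a ↔ f (pq k) = 0 ∧ f (pf k a) = 0 ∧ ∀ j, f (gen k a j) = 0 := by
  constructor
  · rintro ⟨h1, h2, h3, h4⟩
    refine ⟨?_, ?_, ?_⟩
    · simp only [pq, map_sub, map_mul, h1, sub_self]
    · simp only [pf, map_sub, map_mul, map_pow, h2, sub_self]
    · rintro ⟨j, hj⟩
      unfold gen
      dsimp only
      split_ifs with c
      · simp only [map_sub, map_mul, map_pow, h3 j c, sub_self]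
      · simp only [map_sub, map_mul, map_pow, h4 (j - (a + 1)) (by omega), sub_self]
  · rintro ⟨h1, h2, h3⟩
    refine ⟨?_, ?_, ?_, ?_⟩
    · simpa [pq, sub_eq_zero] using h1
    · simpa [pf, sub_eq_zero] using h2
    · intro i hi
      have := h3 ⟨i, by omega⟩
      rw [gen, if_pos hi] at this
      simpa [sub_eq_zero] using this
    · intro i hi
      have := h3 ⟨a + 1 + i, by omega⟩
      rw [gen, if_neg (by dsimp only; omega)] at this
      dsimp only at this
      rw [show a + 1 + i - (a + 1) = i by omega] at this
      simpa [sub_eq_zero] using this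

/-- `(q)` -/
noncomputable def Jq (k : Type*) [Field k] : Ideal (RR k) := Ideal.span {pq k}
/-- `(q, f)` -/
noncomputable def Jf (k : Type*) [Field k] (a : ℕ) : Ideal (RR k) := Jq k ⊔ Ideal.span {pf k a}
/-- all generators but the last -/
noncomputable def Jg (k : Type*) [Field k] (a : ℕ) : Ideal (RR k) := Jf k a ⊔ Ideal.span (Set.range (gen k a))
/-- all generators -/
noncomputable def JF (k : Type*) [Field k] (a : ℕ) : Ideal (RR k) := Jg k a ⊔ Ideal.span {pF k a}

lemma ker_q (x : RR k) : aeval (R := k) (gs k) x = 0 ↔ x ∈ Jq k := by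
  constructor
  · refine ring_toric (gs k) (fun m => ![m 1 + m 2 + m 3 + m 4, m 1 + m 2, m 2 + m 4, m 0]) ?_ _ ?_ x
    · intro m
      rw [prod5, Fin.prod_univ_four]
      simp [mon, gs]
      ring
    · intro m m' h
      have e0 := congrFun h 0
      have e1 := congrFun h 1
      have e2 := congrFun h 2
      have e3 := congrFun h 3
      simp at e0 e1 e2 e3
      have hq : Ideal.Quotient.mk (Jq k) (X 1) * Ideal.Quotient.mk (Jq k) (X 4) =
          Ideal.Quotient.mk (Jq k) (X 2) * Ideal.Quotient.mk (Jq k) (X 3) := by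
        rw [← map_mul, ← map_mul, Ideal.Quotient.eq]
        exact Ideal.subset_span rfl
      simp only [map_prod, map_pow]
      rw [prod5 (fun i => Ideal.Quotient.mk (Jq k) (X i)), prod5 (fun i => Ideal.Quotient.mk (Jq k) (X i)), e3]
      exact segre _ hq e0 e1 e2
  · intro h
    have : Jq k ≤ RingHom.ker (aeval (R := k) (gs k)) := by
      rw [Jq, Ideal.span_le]
      rintro _ rfl
      simp only [SetLike.mem_coe, RingHom.mem_ker, pq, map_sub, map_mul, aeval_X, gs]
      simp; ring
    exact this h

lemma ker_f (a : ℕ) (x : RR k) : aeval (R := k) (gth k a) x = 0 ↔ x ∈ Jf k a := by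
  constructor
  · refine ring_toric (gth k a) (fun m => ![m 0 + m 1 + m 2 + m 3 + m 4, (a + 1) * m 0 + m 1 + m 2,
      (a + 1) * m 0 + m 2 + m 4, 0]) ?_ _ ?_ x
    · intro m
      rw [prod5, Fin.prod_univ_four]
      simp [mon, gth]
      ring
    · intro m m' h
      have e0 := congrFun h 0
      have e1 := congrFun h 1
      have e2 := congrFun h 2
      simp at e0 e1 e2
      have hq : Ideal.Quotient.mk (Jf k a) (X 1) * Ideal.Quotient.mk (Jf k a) (X 4) =
          Ideal.Quotient.mk (Jf k a) (X 2) * Ideal.Quotient.mk (Jf k a) (X 3) := by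
        rw [← map_mul, ← map_mul, Ideal.Quotient.eq]
        exact Ideal.mem_sup_left (Ideal.subset_span rfl)
      have hf : Ideal.Quotient.mk (Jf k a) (X 2) ^ (a + 1) =
          Ideal.Quotient.mk (Jf k a) (X 0) * Ideal.Quotient.mk (Jf k a) (X 3) ^ a := by
        rw [← map_pow, ← map_pow, ← map_mul, Ideal.Quotient.eq]
        exact Ideal.mem_sup_right (Ideal.subset_span rfl)
      simp only [map_prod, map_pow]
      rw [prod5 (fun i => Ideal.Quotient.mk (Jf k a) (X i)), prod5 (fun i => Ideal.Quotient.mk (Jf k a) (X i))]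
      exact theta_eq _ a hq hf e0 e1 e2
  · intro h
    have : Jf k a ≤ RingHom.ker (aeval (R := k) (gth k a)) := by
      rw [Jf, Jq, sup_le_iff, Ideal.span_le, Ideal.span_le]
      constructor
      · rintro _ rfl
        simp only [SetLike.mem_coe, RingHom.mem_ker, pq, map_sub, map_mul, aeval_X, gth]
        simp; ring
      · rintro _ rfl
        simp only [SetLike.mem_coe, RingHom.mem_ker, pf, map_sub, map_mul, map_pow, aeval_X, gth]
        simp; ring
    exact this h

lemma step_q (x : RR k) : x * pq k ∈ (⊥ : Ideal (RR k)) ↔ x = 0 := by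
  rw [Ideal.mem_bot, mul_eq_zero, or_iff_left]
  intro h
  have := congrArg (aeval (R := k) (![0, 1, 0, 0, 1] : Fin 5 → k)) h
  simp [pq] at this

lemma step_f (a : ℕ) (x : RR k) : x * pf k a ∈ Jq k ↔ x ∈ Jq k := by
  rw [← ker_q, ← ker_q, map_mul, mul_eq_zero, or_iff_left]
  intro h
  have := congrArg (aeval (R := k) (![1, 1, 1, 0] : Fin 4 → k)) h
  simp [pf, gs] at this

lemma th_gen (a : ℕ) (j : Fin (2 * a + 2)) :
    aeval (R := k) (gth k a) (gen k a j) =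
      mmN k a j * (X 0 ^ (a + 2) * (X 1 - X 1 ^ (a + 1) * X 2 ^ (2 * (a + 1)))) := by
  obtain ⟨j, hj⟩ := j
  have t0 : gth k a 0 = X 0 * X 1 ^ (a + 1) * X 2 ^ (a + 1) := rfl
  have t1 : gth k a 1 = X 0 * X 1 := rfl
  have t2 : gth k a 2 = X 0 * X 1 * X 2 := rfl
  have t3 : gth k a 3 = X 0 := rfl
  have t4 : gth k a 4 = X 0 * X 2 := rfl
  unfold gen mmN
  dsimp only
  split_ifs with c
  · obtain ⟨d, rfl⟩ := Nat.exists_eq_add_of_le c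
    simp only [map_sub, map_mul, map_pow, aeval_X, t0, t1, t2, t3, t4]
    rw [show min j (j + d + 1) = j by omega, show j - (j + d + 1) = 0 by omega,
      show j + d + 1 - j = d + 1 by omega]
    ring
  · obtain ⟨i, rfl⟩ : ∃ i, j = a + 1 + i := ⟨j - a - 1, by omega⟩
    obtain ⟨d, rfl⟩ := Nat.exists_eq_add_of_le (show i ≤ a by omega)
    simp only [map_sub, map_mul, map_pow, aeval_X, t0, t1, t2, t3, t4]
    rw [show i + d + 1 + i - (i + d + 1) = i by omega, show i + d + 2 - i = d + 2 by omega,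
      show min (i + d + 1 + i) (i + d + 1) = i + d + 1 by omega, show i + d - i = d by omega]
    ring

lemma step_g (a : ℕ) (x : Fin (2 * a + 2) → RR k) : ∑ j, x j * gen k a j ∈ Jf k a ↔
    x ∈ Submodule.span (RR k) (Set.range (cpsi k a)) ⊔ Submodule.span (RR k) (Set.range (cphi k a)) := by
  rw [← ker_f, ← phi_ker, map_sum]
  have : ∑ j, aeval (R := k) (gth k a) (x j * gen k a j) =
      tau (gth k a) (fun j : Fin (2 * a + 2) => mmN k a j) x *
        (X 0 ^ (a + 2) * (X 1 - X 1 ^ (a + 1) * X 2 ^ (2 * (a + 1)))) := by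
    rw [tau_apply, Finset.sum_mul]
    refine Finset.sum_congr rfl fun j _ => ?_
    rw [map_mul, th_gen]; ring
  rw [this, mul_eq_zero, or_iff_left]
  intro h
  have := congrArg (aeval (R := k) (![1, 1, 0, 0] : Fin 4 → k)) h
  simp at this

/-- the endomorphism killing some variables -/
noncomputable def kill (k : Type*) [Field k] (S : Finset (Fin 5)) : RR k →ₐ[k] RR k :=
  aeval fun i => if i ∈ S then 0 else X i

lemma ker_kill (S : Finset (Fin 5)) (x : RR k) :
    kill k S x = 0 ↔ x ∈ Ideal.span ((X : Fin 5 → RR k) '' S) := by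
  constructor
  · intro h
    have : (Ideal.Quotient.mkₐ k (Ideal.span ((X : Fin 5 → RR k) '' S))).comp (kill k S) =
        Ideal.Quotient.mkₐ k (Ideal.span ((X : Fin 5 → RR k) '' S)) := by
      apply MvPolynomial.algHom_ext
      intro i
      simp only [kill, AlgHom.comp_apply, aeval_X]
      split_ifs with c
      · rw [map_zero, eq_comm]
        exact Ideal.Quotient.eq_zero_iff_mem.2 (Ideal.subset_span ⟨i, c, rfl⟩)
      · rfl
    have h2 := DFunLike.congr_fun this x
    rw [AlgHom.comp_apply, h, map_zero, eq_comm] at h2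
    exact Ideal.Quotient.eq_zero_iff_mem.1 h2
  · intro h
    have : Ideal.span ((X : Fin 5 → RR k) '' S) ≤ RingHom.ker (kill k S) := by
      rw [Ideal.span_le]
      rintro _ ⟨i, hi, rfl⟩
      simp only [SetLike.mem_coe, RingHom.mem_ker, kill, aeval_X]
      rw [if_pos (by simpa using hi)]
    exact this h

lemma step_X (S : Finset (Fin 5)) (i : Fin 5) (hi : i ∉ S) (x : RR k) :
    x * X i ∈ Ideal.span ((X : Fin 5 → RR k) '' S) ↔ x ∈ Ideal.span ((X : Fin 5 → RR k) '' S) := by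
  rw [← ker_kill, ← ker_kill, map_mul, mul_eq_zero, or_iff_left]
  simp [kill, hi]

lemma rel_Jg (a : ℕ) : Rel' (fun i => Ideal.Quotient.mk (Jg k a) (X i)) a := by
  rw [rel_iff]
  refine ⟨?_, ?_, fun j => ?_⟩ <;> rw [Ideal.Quotient.eq_zero_iff_mem]
  · exact Ideal.mem_sup_left (Ideal.mem_sup_left (Ideal.subset_span rfl))
  · exact Ideal.mem_sup_left (Ideal.mem_sup_right (Ideal.subset_span rfl))
  · exact Ideal.mem_sup_right (Ideal.subset_span ⟨j, rfl⟩)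

lemma Jg_le_ker {Q : Type*} [CommRing Q] (f : RR k →+* Q) (a : ℕ) (h : Rel' (fun i => f (X i)) a) :
    Jg k a ≤ RingHom.ker f := by
  rw [rel_iff] at h
  rw [Jg, Jf, Jq, sup_le_iff, sup_le_iff, Ideal.span_le, Ideal.span_le, Ideal.span_le]
  refine ⟨⟨?_, ?_⟩, ?_⟩
  · rintro _ rfl; exact h.1
  · rintro _ rfl; exact h.2.1
  · rintro _ ⟨j, rfl⟩; exact h.2.2 j

lemma rel_mulF {Q : Type*} [CommRing Q] {y : Fin 5 → Q} {a : ℕ} (H : Rel' y a) (i : Fin 5)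
    (hi : i = 0 ∨ i = 1 ∨ i = 2) :
    y i * y 3 ^ (2 * (a + 1)) = y i * (y 2 ^ a * y 4 ^ (a + 2)) := by
  have g0 := H.g1 0 (by omega)
  have ga := H.g1 a le_rfl
  have hq := H.q
  have hf := H.f
  simp only [Nat.sub_zero, pow_zero, mul_one, zero_add, pow_one] at g0
  rw [show a + 1 - a = 1 by omega, pow_one, pow_one] at ga
  rcases hi with rfl | rfl | rfl
  · have h1 : mon y 0 0 (a + 1) (a + 2) 0 = mon y 0 (a + 1) 0 1 (a + 1) := segre y hq (by omega) (by omega) (by omega)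
    simp only [mon, pow_zero, one_mul, mul_one, pow_one] at h1
    calc y 0 * y 3 ^ (2 * (a + 1)) = (y 0 * y 3 ^ a) * y 3 ^ (a + 2) := by ring
      _ = y 1 ^ (a + 1) * y 3 * y 4 ^ (a + 1) := by rw [← hf, h1]
      _ = _ := by rw [ga]; ring
  · calc y 1 * y 3 ^ (2 * (a + 1)) = (y 1 * y 3 ^ (a + 1)) * y 3 ^ (a + 1) := by ring
      _ = (y 0 * y 3 ^ a) * y 3 * y 4 ^ (a + 1) := by rw [g0]; ring
      _ = y 2 ^ a * (y 2 * y 3) * y 4 ^ (a + 1) := by rw [← hf]; ring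
      _ = _ := by rw [← hq]; ring
  · calc y 2 * y 3 ^ (2 * (a + 1)) = (y 2 * y 3) * y 3 ^ a * y 3 ^ (a + 1) := by ring
      _ = (y 1 * y 3 ^ (a + 1)) * y 3 ^ a * y 4 := by rw [← hq]; ring
      _ = (y 0 * y 3 ^ a) * y 4 ^ (a + 2) := by rw [g0]; ring
      _ = _ := by rw [← hf]; ring

lemma step_F (a : ℕ) (ha : 1 ≤ a) (x : RR k) :
    x * pF k a ∈ Jg k a ↔ x ∈ Ideal.span ((X : Fin 5 → RR k) '' ({0, 1, 2} : Finset (Fin 5))) := by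
  have k0 : kill k {0, 1, 2} (X 0) = 0 := by simp [kill]
  have k1 : kill k {0, 1, 2} (X 1) = 0 := by simp [kill]
  have k2 : kill k {0, 1, 2} (X 2) = 0 := by simp [kill]
  have k3 : kill k {0, 1, 2} (X 3) = X 3 := by simp [kill]
  constructor
  · intro h
    have hle := Jg_le_ker (kill k {0, 1, 2}).toRingHom a (by
      refine ⟨?_, ?_, ?_, ?_⟩
      · simp [k1, k2]
      · simp [k0, k2]
      · intro i hi; simp [k1, k0]
      · intro j hj
        have : a + 2 - j ≠ 0 := by omega
        simp [k1, k0, this])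
    have h1 : kill k {0, 1, 2} (x * pF k a) = 0 := hle h
    rw [← ker_kill]
    rw [map_mul, mul_eq_zero] at h1
    rcases h1 with h1 | h1
    · exact h1
    · exfalso
      have ha0 : a ≠ 0 := by omega
      simp only [pF, map_sub, map_mul, map_pow, k2, k3, zero_pow ha0, zero_mul, sub_zero] at h1
      exact pow_ne_zero _ (X_ne_zero _) h1
  · intro h
    induction h using Submodule.span_induction with
    | mem x hx =>
      obtain ⟨i, hi, rfl⟩ := hx
      have hi' : i = 0 ∨ i = 1 ∨ i = 2 := by simpa using hi
      have := rel_mulF (rel_Jg (k := k) a) i hi'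
      rw [← Ideal.Quotient.eq_zero_iff_mem, pF]
      simp only [map_mul, map_sub, map_pow, mul_sub]
      rw [sub_eq_zero]; exact this
    | zero => simp
    | add x y _ _ hx hy => rw [add_mul]; exact add_mem hx hy
    | smul r x _ hx => rw [smul_eq_mul, mul_assoc]; exact Ideal.mul_mem_left _ _ hx

/-- the parametrisation of the projective monomial curve -/
noncomputable def gpi (k : Type*) [Field k] (a : ℕ) : Fin 5 → MvPolynomial (Fin 2) k :=
  ![X 0 ^ ((a + 1) * (a + 2) + a), X 0 ^ (3 * a + 2) * X 1 ^ (a * (a + 1)),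
    X 0 ^ (2 * a + 2) * X 1 ^ (a * (a + 2)), X 0 ^ a * X 1 ^ ((a + 1) * (a + 2)),
    X 1 ^ ((a + 1) * (a + 2) + a)]

lemma mon_gpi (a e0 e1 e2 e3 e4 : ℕ) : mon (gpi k a) e0 e1 e2 e3 e4 =
    X 0 ^ (((a + 1) * (a + 2) + a) * e0 + (3 * a + 2) * e1 + (2 * a + 2) * e2 + a * e3) *
    X 1 ^ (a * (a + 1) * e1 + a * (a + 2) * e2 + (a + 1) * (a + 2) * e3 + ((a + 1) * (a + 2) + a) * e4) := by
  have t0 : gpi k a 0 = X 0 ^ ((a + 1) * (a + 2) + a) := rfl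
  have t1 : gpi k a 1 = X 0 ^ (3 * a + 2) * X 1 ^ (a * (a + 1)) := rfl
  have t2 : gpi k a 2 = X 0 ^ (2 * a + 2) * X 1 ^ (a * (a + 2)) := rfl
  have t3 : gpi k a 3 = X 0 ^ a * X 1 ^ ((a + 1) * (a + 2)) := rfl
  have t4 : gpi k a 4 = X 1 ^ ((a + 1) * (a + 2) + a) := rfl
  simp only [mon, t0, t1, t2, t3, t4, mul_pow, ← pow_mul, pow_add _ (_ + _) (_ * _),
    pow_add _ (_ * _ : ℕ) (_ * _)]
  ring

lemma mon_gpi_eq (a : ℕ) {e0 e1 e2 e3 e4 f0 f1 f2 f3 f4 : ℕ}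
    (h1 : ((a + 1) * (a + 2) + a) * e0 + (3 * a + 2) * e1 + (2 * a + 2) * e2 + a * e3 =
      ((a + 1) * (a + 2) + a) * f0 + (3 * a + 2) * f1 + (2 * a + 2) * f2 + a * f3)
    (h2 : a * (a + 1) * e1 + a * (a + 2) * e2 + (a + 1) * (a + 2) * e3 + ((a + 1) * (a + 2) + a) * e4 =
      a * (a + 1) * f1 + a * (a + 2) * f2 + (a + 1) * (a + 2) * f3 + ((a + 1) * (a + 2) + a) * f4) :
    mon (gpi k a) e0 e1 e2 e3 e4 = mon (gpi k a) f0 f1 f2 f3 f4 := by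
  rw [mon_gpi, mon_gpi, h1, h2]

lemma rel_gpi (a : ℕ) : Rel' (gpi k a) a := by
  refine ⟨?_, ?_, ?_, ?_⟩
  · have := mon_gpi_eq (k := k) a (e0 := 0) (e1 := 1) (e2 := 0) (e3 := 0) (e4 := 1)
      (f0 := 0) (f1 := 0) (f2 := 1) (f3 := 1) (f4 := 0) (by ring) (by ring)
    simpa [mon] using this
  · have := mon_gpi_eq (k := k) a (e0 := 0) (e1 := 0) (e2 := a + 1) (e3 := 0) (e4 := 0)
      (f0 := 1) (f1 := 0) (f2 := 0) (f3 := a) (f4 := 0) (by ring) (by ring)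
    simpa [mon] using this
  · intro i hi
    obtain ⟨d, rfl⟩ := Nat.exists_eq_add_of_le hi
    have := mon_gpi_eq (k := k) (i + d) (e0 := 0) (e1 := i + 1) (e2 := 0) (e3 := d + 1) (e4 := 0)
      (f0 := 1) (f1 := 0) (f2 := i) (f3 := 0) (f4 := d + 1) (by ring) (by ring)
    rw [show i + d + 1 - i = d + 1 by omega]
    simpa [mon] using this
  · intro j hj
    obtain ⟨d, rfl⟩ := Nat.exists_eq_add_of_le hj
    have := mon_gpi_eq (k := k) (j + d) (e0 := 0) (e1 := d + 2) (e2 := j) (e3 := 0) (e4 := 0)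
      (f0 := 2) (f1 := 0) (f2 := 0) (f3 := d) (f4 := j) (by ring) (by ring)
    rw [show j + d + 2 - j = d + 2 by omega, show j + d - j = d by omega]
    simpa [mon] using this

lemma ker_F (a : ℕ) (ha : 1 ≤ a) (hc : Nat.Coprime a (2 * (a + 1))) (x : RR k) :
    aeval (R := k) (gpi k a) x = 0 ↔ x ∈ JF k a := by
  constructor
  · refine ring_toric (gpi k a) (fun m => ![((a + 1) * (a + 2) + a) * m 0 + (3 * a + 2) * m 1 +
      (2 * a + 2) * m 2 + a * m 3, a * (a + 1) * m 1 + a * (a + 2) * m 2 + (a + 1) * (a + 2) * m 3 +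
      ((a + 1) * (a + 2) + a) * m 4]) ?_ _ ?_ x
    · intro m
      rw [prod5, Fin.prod_univ_two, mon_gpi]
      simp
    · intro m m' h
      have e0 := congrFun h 0
      have e1 := congrFun h 1
      simp only [Matrix.cons_val_zero, Matrix.cons_val_one] at e0 e1
      have hW : m 0 + m 1 + m 2 + m 3 + m 4 = m' 0 + m' 1 + m' 2 + m' 3 + m' 4 := by
        apply Nat.eq_of_mul_eq_mul_left (show 0 < (a + 1) * (a + 2) + a by positivity)
        linear_combination e0 + e1
      have hle : Jg k a ≤ RingHom.ker (Ideal.Quotient.mk (JF k a)) := by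
        rw [Ideal.mk_ker]; exact le_sup_left
      have H : Rel' (fun i => Ideal.Quotient.mk (JF k a) (X i)) a := by
        rw [rel_iff]
        refine ⟨?_, ?_, fun j => ?_⟩
        · exact hle (Ideal.mem_sup_left (Ideal.mem_sup_left (Ideal.subset_span rfl)))
        · exact hle (Ideal.mem_sup_left (Ideal.mem_sup_right (Ideal.subset_span rfl)))
        · exact hle (Ideal.mem_sup_right (Ideal.subset_span ⟨j, rfl⟩))
      have HF : Ideal.Quotient.mk (JF k a) (X 3) ^ (2 * (a + 1)) =
          Ideal.Quotient.mk (JF k a) (X 2) ^ a * Ideal.Quotient.mk (JF k a) (X 4) ^ (a + 2) := by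
        rw [← map_pow, ← map_pow, ← map_pow, ← map_mul, Ideal.Quotient.eq]
        exact Ideal.mem_sup_right (Ideal.subset_span rfl)
      simp only [map_prod, map_pow]
      rw [prod5 (fun i => Ideal.Quotient.mk (JF k a) (X i)), prod5 (fun i => Ideal.Quotient.mk (JF k a) (X i))]
      exact full_eq _ a ha H HF hc hW e1
  · intro h
    have hr : Rel' (fun i => (aeval (R := k) (gpi k a)).toRingHom (X i)) a := by
      have : (fun i => (aeval (R := k) (gpi k a)).toRingHom (X i)) = gpi k a := by
        funext i; exact aeval_X _ _
      rw [this]; exact rel_gpi a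
    have : JF k a ≤ RingHom.ker (aeval (R := k) (gpi k a)).toRingHom := by
      rw [JF, sup_le_iff, Ideal.span_le]
      refine ⟨Jg_le_ker _ a hr, ?_⟩
      rintro _ rfl
      have := mon_gpi_eq (k := k) a (e0 := 0) (e1 := 0) (e2 := 0) (e3 := 2 * (a + 1)) (e4 := 0)
        (f0 := 0) (f1 := 0) (f2 := a) (f3 := 0) (f4 := a + 2) (by ring) (by ring)
      simp only [mon, pow_zero, one_mul, mul_one] at this
      show aeval (R := k) (gpi k a) (pF k a) = 0
      simp only [pF, map_sub, map_mul, map_pow, aeval_X]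
      rw [this, sub_self]
    exact this h

end ideals
end Bres

namespace Bres

section build
variable {k : Type*} [Field k]

lemma homV_of_isHom {r e s' : ℕ} (v : Fin r → RR k) (hv : ∀ i, (v i).IsHomogeneous e) :
    HomV (fun _ => s') (s' + e) v := by
  intro i m h
  have := hv i h
  have h2 : m.degree = e := by rw [← this, Finsupp.degree_eq_weight_one]; rfl
  dsimp only
  rw [add_comm, h2]

/-- cone on a map given by homogeneous columns -/
lemma cone_cols {r s r' s' : ℕ} (F : Res k r s) (G : Res k r' s') (e : ℕ) (hs : s = s' + e)
    (g : Fin r → Fin r' → RR k) (hg : ∀ j i, (g j i).IsHomogeneous e)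
    (hf : ∀ x : Fin r → RR k, ∑ j, x j • g j ∈ LinearMap.range G.aug ↔ x ∈ LinearMap.range F.aug)
    {c c' : ℕ → ℕ} {D D' : ℕ → Set ℕ} (hF : F.Num c D) (hG : G.Num c' D') :
    ∃ C : Res k r' s',
      LinearMap.range C.aug = LinearMap.range G.aug ⊔ Submodule.span (RR k) (Set.range g) ∧
      C.Num (fun n => c' n + consN r c n) (fun n => D' n ∪ consN {s} D n) := by
  obtain ⟨f0, h1, h2⟩ := exists_gr (fun _ : Fin r => s) (fun _ : Fin r' => s') g
    (fun j => by rw [hs]; exact homV_of_isHom _ (hg j))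
  have h3 : f0 = Fintype.linearCombination (RR k) g := by
    apply LinearMap.pi_ext'
    intro j
    apply LinearMap.ext_ring
    simp [h2, Fintype.linearCombination_apply_single]
  have h4 : LinearMap.range f0 = Submodule.span (RR k) (Set.range g) := by
    rw [h3, Fintype.range_linearCombination]
  rw [← h4]
  refine exists_cone_num F G f0 h1 ?_ hF hG
  intro x
  rw [← hf, h3, Fintype.linearCombination_apply]

/-- cone over a resolution of a cyclic module -/
lemma cone_one {r s s' : ℕ} (F : Res k r s) (G : Res k 1 s') (e : ℕ) (hs : s = s' + e)
    (J J' : Ideal (RR k)) (hJ : ∀ v, v ∈ LinearMap.range G.aug ↔ v 0 ∈ J)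
    (g : Fin r → RR k) (hg : ∀ j, (g j).IsHomogeneous e) (hJ' : J' = J ⊔ Ideal.span (Set.range g))
    (hf : ∀ x : Fin r → RR k, ∑ j, x j * g j ∈ J ↔ x ∈ LinearMap.range F.aug)
    {c c' : ℕ → ℕ} {D D' : ℕ → Set ℕ} (hF : F.Num c D) (hG : G.Num c' D') :
    ∃ C : Res k 1 s', (∀ v, v ∈ LinearMap.range C.aug ↔ v 0 ∈ J') ∧
      C.Num (fun n => c' n + consN r c n) (fun n => D' n ∪ consN {s} D n) := by
  obtain ⟨C, h1, h2⟩ := cone_cols F G e hs (fun j _ => g j) (fun j _ => hg j)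
    (fun x => by rw [hJ, ← hf]; simp) hF hG
  refine ⟨C, ?_, h2⟩
  have e1 : LinearMap.range G.aug = Submodule.comap (LinearEquiv.funUnique (Fin 1) (RR k) (RR k)).toLinearMap J := by
    ext v; rw [hJ]; rfl
  have e2 : Submodule.span (RR k) (Set.range fun (j : Fin r) (_ : Fin 1) => g j) =
      Submodule.comap (LinearEquiv.funUnique (Fin 1) (RR k) (RR k)).toLinearMap (Ideal.span (Set.range g)) := by
    apply le_antisymm
    · rw [Submodule.span_le]
      rintro _ ⟨j, rfl⟩
      exact Ideal.subset_span ⟨j, rfl⟩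
    · intro v hv
      have hv : v 0 ∈ Ideal.span (Set.range g) := hv
      rw [Ideal.mem_span_range_iff_exists_fun] at hv
      obtain ⟨c, hc⟩ := hv
      have : v = ∑ j, c j • (fun _ : Fin 1 => g j) := by
        funext i
        rw [Subsingleton.elim i 0, ← hc]
        simp
      rw [this]
      exact Submodule.sum_mem _ fun j _ => Submodule.smul_mem _ _ (Submodule.subset_span ⟨j, rfl⟩)
  intro v
  rw [h1, e1, e2, hJ']
  constructor
  · intro hv
    obtain ⟨x, hx, y, hy, rfl⟩ := Submodule.mem_sup.1 hv
    exact Submodule.add_mem_sup hx hy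
  · intro hv
    obtain ⟨x, hx, y, hy, hxy⟩ := Submodule.mem_sup.1 hv
    have : v = (fun _ => x) + (fun _ => y) := by
      funext i
      rw [Subsingleton.elim i 0, ← hxy]; rfl
    rw [this]
    exact Submodule.add_mem_sup (show _ ∈ J from hx) (show _ ∈ Ideal.span (Set.range g) from hy)

lemma cone_elt {s s' : ℕ} (F : Res k 1 s) (G : Res k 1 s') (e : ℕ) (hs : s = s' + e)
    (J J' JF' : Ideal (RR k)) (hJ : ∀ v, v ∈ LinearMap.range G.aug ↔ v 0 ∈ J)
    (hJF : ∀ v, v ∈ LinearMap.range F.aug ↔ v 0 ∈ JF')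
    (g : RR k) (hg : g.IsHomogeneous e) (hJ' : J' = J ⊔ Ideal.span {g})
    (hf : ∀ x : RR k, x * g ∈ J ↔ x ∈ JF')
    {c c' : ℕ → ℕ} {D D' : ℕ → Set ℕ} (hF : F.Num c D) (hG : G.Num c' D') :
    ∃ C : Res k 1 s', (∀ v, v ∈ LinearMap.range C.aug ↔ v 0 ∈ J') ∧
      C.Num (fun n => c' n + consN 1 c n) (fun n => D' n ∪ consN {s} D n) := by
  refine cone_one F G e hs J J' hJ (fun _ => g) (fun _ => hg) ?_ ?_ hF hG
  · rw [hJ', Set.range_const]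
  · intro x
    rw [hJF, ← hf]; simp

lemma base_mem (s : ℕ) (v) : v ∈ LinearMap.range (base k 1 s).aug ↔ v 0 ∈ (⊥ : Ideal (RR k)) := by
  have : (base k 1 s).aug = 0 := rfl
  rw [this, LinearMap.range_zero, Submodule.mem_bot, Ideal.mem_bot, funext_iff, Fin.forall_fin_one]
  rfl

/-- The full resolution. -/
lemma exists_res (a : ℕ) (ha : 3 ≤ a) : ∃ C : Res k 1 0,
    (∀ v, v ∈ LinearMap.range C.aug ↔ v 0 ∈ JF k a) ∧
    Nat.card (C.ι 0) = 2 * a + 2 + 3 ∧ Nat.card (C.ι 1) = 2 * (2 * a + 2) + 4 ∧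
    Nat.card (C.ι 2) = 2 * a + 2 + 3 ∧ Nat.card (C.ι 3) = 1 ∧ Nat.card (C.ι 4) = 0 ∧
    (∀ i, 0 < C.deg 0 i) ∧ (∀ i j, C.deg 0 i ≠ C.deg 1 j) ∧ (∀ i j, C.deg 1 i ≠ C.deg 2 j) ∧
    (∀ i j, C.deg 2 i ≠ C.deg 3 j) := by
  obtain ⟨C1, m1, n1⟩ := cone_elt (base k 1 2) (base k 1 0) 2 rfl ⊥ (Jq k) ⊥ (base_mem 0) (base_mem 2)
    (pq k) hom_pq (by rw [bot_sup_eq]; rfl) (fun x => by rw [step_q, Ideal.mem_bot]) (base_num _ _) (base_num _ _)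
  obtain ⟨C2, m2, n2⟩ := cone_elt (C1.shift (a + 1)) C1 (a + 1) rfl (Jq k) (Jf k a) (Jq k) m1 m1
    (pf k a) (hom_pf a) rfl (step_f a) (n1.shift _) n1
  obtain ⟨N1, m3, n3⟩ := cone_cols (base k (2 * a + 2) (a + 2 + 1)) (base k (2 * a + 2) (a + 2)) 1 rfl
    (cpsi k a) (hom_cpsi a) (fun x => by
      have e1 : (base k (2 * a + 2) (a + 2)).aug = 0 := rfl
      have e2 : (base k (2 * a + 2) (a + 2 + 1)).aug = 0 := rfl
      rw [e1, e2, LinearMap.range_zero, LinearMap.range_zero, Submodule.mem_bot, Submodule.mem_bot]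
      exact ⟨psi_inj a x, fun h => by simp [h]⟩) (base_num _ _) (base_num _ _)
  have e1 : (base k (2 * a + 2) (a + 2)).aug = 0 := rfl
  rw [e1, LinearMap.range_zero, bot_sup_eq] at m3
  obtain ⟨N2, m4, n4⟩ := cone_cols (N1.shift 1) N1 1 rfl
    (cphi k a) (hom_cphi a) (fun x => by
      have e2 : LinearMap.range (N1.shift 1).aug = LinearMap.range N1.aug := rfl
      rw [e2, m3]; exact phi_psi a x) (n3.shift _) n3
  rw [m3] at m4
  obtain ⟨C3, m5, n5⟩ := cone_one N2 C2 (a + 2) (by omega) (Jf k a) (Jg k a) m2 (gen k a) (hom_gen a) rfl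
    (fun x => by rw [m4]; exact step_g a x) n4 n2
  obtain ⟨K1, m6, n6⟩ := cone_elt (base k 1 (2 * (a + 1) + 1)) (base k 1 (2 * (a + 1))) 1 rfl
    ⊥ (Ideal.span ((X : Fin 5 → RR k) '' ({0} : Finset (Fin 5)))) ⊥ (base_mem _) (base_mem _)
    (X 0) (isHomogeneous_X _ _) (by simp) (fun x => by
      rw [Ideal.mem_bot, Ideal.mem_bot, mul_eq_zero, or_iff_left (X_ne_zero _)]) (base_num _ _) (base_num _ _)
  obtain ⟨K2, m7, n7⟩ := cone_elt (K1.shift 1) K1 1 rfl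
    _ (Ideal.span ((X : Fin 5 → RR k) '' ({0, 1} : Finset (Fin 5)))) _ m6 m6
    (X 1) (isHomogeneous_X _ _) (by rw [← Ideal.span_union]; congr 1; simp [Set.image_insert_eq]; exact Set.pair_comm _ _)
    (step_X _ _ (by simp)) (n6.shift _) n6
  obtain ⟨K3, m8, n8⟩ := cone_elt (K2.shift 1) K2 1 rfl
    _ (Ideal.span ((X : Fin 5 → RR k) '' ({0, 1, 2} : Finset (Fin 5)))) _ m7 m7
    (X 2) (isHomogeneous_X _ _) (by
      rw [← Ideal.span_union]; congr 1; simp [Set.image_insert_eq]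
      ext; simp; tauto)
    (step_X _ _ (by simp)) (n7.shift _) n7
  obtain ⟨C4, m9, n9⟩ := cone_elt K3 C3 (2 * (a + 1)) (by omega) _ (JF k a) _ m5 m8 (pF k a) (hom_pF a) rfl
    (step_F a (by omega)) n8 n5
  have d0 := n9.degs 0
  have d1 := n9.degs 1
  have d2 := n9.degs 2
  have d3 := n9.degs 3
  simp [consN] at d0 d1 d2 d3
  refine ⟨C4, m9, ?_, ?_, ?_, ?_, ?_, ?_, ?_, ?_, ?_⟩
  · rw [n9.card]; simp only [consN]; omega
  · rw [n9.card]; simp only [consN]; omega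
  · rw [n9.card]; simp only [consN]; omega
  · rw [n9.card]; simp only [consN]
  · rw [n9.card]; simp only [consN]
  · intro i
    have := d0 i
    omega
  · intro i j
    have h1 := d0 i
    have h2 := d1 j
    omega
  · intro i j
    have h1 := d1 i
    have h2 := d2 j
    omega
  · intro i j
    have h1 := d2 i
    have h2 := d3 j
    omega

end build
end Bres

namespace Bres

section final
variable {k : Type*} [Field k]

/-- the irrelevant ideal -/
noncomputable def mI (k : Type*) [Field k] : Ideal (RR k) := Ideal.span (Set.range (X : Fin 5 → RR k))

lemma mem_mI {p : RR k} (hp : coeff 0 p = 0) : p ∈ mI k := by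
  have := (mem_ideal_span_X_image (R := k) (x := p) (s := (Set.univ : Set (Fin 5)))).2 (by
    intro m hm
    by_contra h
    push Not at h
    have : m = 0 := by ext i; exact h i (Set.mem_univ _)
    rw [this, mem_support_iff] at hm
    exact hm hp)
  rwa [Set.image_univ] at this

lemma mem_smul_top {ι : Type} [Finite ι] (v : ι → RR k) (hv : ∀ i, v i ∈ mI k) :
    v ∈ mI k • (⊤ : Submodule (RR k) (ι → RR k)) := by
  classical
  have := Fintype.ofFinite ι
  rw [pi_eq_sum_univ' v]
  exact Submodule.sum_mem _ fun i _ => Submodule.smul_mem_smul (hv i) trivial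

lemma gr_min {κ ι : Type} [Finite κ] [Finite ι] {dκ : κ → ℕ} {dι : ι → ℕ}
    {f : (κ → RR k) →ₗ[RR k] (ι → RR k)} (hf : IsGr dκ dι f) (h : ∀ i j, dι i ≠ dκ j) :
    LinearMap.range f ≤ mI k • (⊤ : Submodule (RR k) (ι → RR k)) := by
  classical
  have := Fintype.ofFinite κ
  rintro _ ⟨v, rfl⟩
  rw [pi_eq_sum_univ' v, map_sum]
  refine Submodule.sum_mem _ fun j _ => ?_
  rw [map_smul]
  apply Submodule.smul_mem
  apply mem_smul_top
  intro i
  apply mem_mI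
  by_contra hc
  have h1 := homV_single (k := k) dκ j 0 1
  have h2 := hf _ _ h1 i 0 (by
    convert hc using 4
    rfl)
  simp at h2
  exact h i j h2

/-- abstract finite extraction -/
lemma extract (C : Res k 1 0) (J : Ideal (RR k)) (hJ : ∀ v, v ∈ LinearMap.range C.aug ↔ v 0 ∈ J)
    (n0 n1 n2 : ℕ) (h0 : Nat.card (C.ι 0) = n0) (h1 : Nat.card (C.ι 1) = n1)
    (h2 : Nat.card (C.ι 2) = n2) (h3 : Nat.card (C.ι 3) = 1) (h4 : Nat.card (C.ι 4) = 0)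
    (p0 : ∀ i, 0 < C.deg 0 i) (p1 : ∀ i j, C.deg 0 i ≠ C.deg 1 j) (p2 : ∀ i j, C.deg 1 i ≠ C.deg 2 j)
    (p3 : ∀ i j, C.deg 2 i ≠ C.deg 3 j) :
    ∃ (φ₁ : (Fin n0 → RR k) →ₗ[RR k] RR k)
      (φ₂ : (Fin n1 → RR k) →ₗ[RR k] (Fin n0 → RR k))
      (φ₃ : (Fin n2 → RR k) →ₗ[RR k] (Fin n1 → RR k))
      (φ₄ : RR k →ₗ[RR k] (Fin n2 → RR k)),
      LinearMap.range φ₁ = J ∧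
      LinearMap.range φ₂ = LinearMap.ker φ₁ ∧
      LinearMap.range φ₃ = LinearMap.ker φ₂ ∧
      LinearMap.range φ₄ = LinearMap.ker φ₃ ∧
      Function.Injective φ₄ ∧
      LinearMap.range φ₁ ≤ mI k • (⊤ : Submodule (RR k) (RR k)) ∧
      LinearMap.range φ₂ ≤ mI k • (⊤ : Submodule (RR k) (Fin n0 → RR k)) ∧
      LinearMap.range φ₃ ≤ mI k • (⊤ : Submodule (RR k) (Fin n1 → RR k)) ∧
      LinearMap.range φ₄ ≤ mI k • (⊤ : Submodule (RR k) (Fin n2 → RR k)) := by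
  have f0 := C.fin 0
  have f1 := C.fin 1
  have f2 := C.fin 2
  have f3 := C.fin 3
  have f4 := C.fin 4
  let e0 := LinearEquiv.funCongrLeft (RR k) (RR k) (Finite.equivFinOfCardEq h0)
  let e1 := LinearEquiv.funCongrLeft (RR k) (RR k) (Finite.equivFinOfCardEq h1)
  let e2 := LinearEquiv.funCongrLeft (RR k) (RR k) (Finite.equivFinOfCardEq h2)
  let e3 := (LinearEquiv.funUnique (Fin 1) (RR k) (RR k)).symm.trans
    (LinearEquiv.funCongrLeft (RR k) (RR k) (Finite.equivFinOfCardEq h3))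
  let u := LinearEquiv.funUnique (Fin 1) (RR k) (RR k)
  have tr : ∀ {M N : Type _} [AddCommGroup M] [AddCommGroup N] [Module (RR k) M] [Module (RR k) N]
      (e : M ≃ₗ[RR k] N) (P : Submodule (RR k) M), P ≤ mI k • (⊤ : Submodule (RR k) M) →
      P.map e.toLinearMap ≤ mI k • (⊤ : Submodule (RR k) N) := by
    intro M N _ _ _ _ e P hP
    refine (Submodule.map_mono hP).trans ?_
    rw [Submodule.map_smul'']
    exact Submodule.smul_mono le_rfl le_top
  have rg : ∀ {M M' N N' : Type _} [AddCommGroup M] [AddCommGroup M'] [AddCommGroup N] [AddCommGroup N']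
      [Module (RR k) M] [Module (RR k) M'] [Module (RR k) N] [Module (RR k) N']
      (e : M' ≃ₗ[RR k] M) (f : M →ₗ[RR k] N) (e' : N ≃ₗ[RR k] N'),
      LinearMap.range (e'.toLinearMap ∘ₗ f ∘ₗ e.toLinearMap) = (LinearMap.range f).map e'.toLinearMap := by
    intro M M' N N' _ _ _ _ _ _ _ _ e f e'
    rw [LinearMap.range_comp, LinearMap.range_comp_of_range_eq_top _ e.range]
  have kr : ∀ {M M' N N' : Type _} [AddCommGroup M] [AddCommGroup M'] [AddCommGroup N] [AddCommGroup N']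
      [Module (RR k) M] [Module (RR k) M'] [Module (RR k) N] [Module (RR k) N']
      (e : M' ≃ₗ[RR k] M) (f : M →ₗ[RR k] N) (e' : N ≃ₗ[RR k] N'),
      LinearMap.ker (e'.toLinearMap ∘ₗ f ∘ₗ e.toLinearMap) = (LinearMap.ker f).map e.symm.toLinearMap := by
    intro M M' N N' _ _ _ _ _ _ _ _ e f e'
    ext x
    simp only [LinearMap.mem_ker, LinearMap.comp_apply, LinearEquiv.coe_coe, Submodule.mem_map,
      LinearEquiv.map_eq_zero_iff]
    constructor
    · intro h; exact ⟨e x, h, by simp⟩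
    · rintro ⟨y, hy, rfl⟩; simpa using hy
  refine ⟨u.toLinearMap ∘ₗ C.aug ∘ₗ e0.toLinearMap, e0.symm.toLinearMap ∘ₗ C.d 0 ∘ₗ e1.toLinearMap,
    e1.symm.toLinearMap ∘ₗ C.d 1 ∘ₗ e2.toLinearMap, e2.symm.toLinearMap ∘ₗ C.d 2 ∘ₗ e3.toLinearMap,
    ?_, ?_, ?_, ?_, ?_, ?_, ?_, ?_, ?_⟩
  · rw [rg]
    ext x
    rw [Submodule.mem_map]
    constructor
    · rintro ⟨v, hv, rfl⟩; exact (hJ v).1 hv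
    · intro hx; exact ⟨fun _ => x, (hJ _).2 hx, rfl⟩
  · rw [rg, kr, C.exact0]
  · rw [rg, kr, C.exact]
  · rw [rg, kr, C.exact]
  · have : LinearMap.ker (C.d 2) = ⊥ := by
      rw [← C.exact, eq_bot_iff]
      rintro _ ⟨v, rfl⟩
      have : IsEmpty (C.ι 4) := Finite.card_eq_zero_iff.1 h4
      have : v = 0 := funext fun i => isEmptyElim i
      rw [this, map_zero]; exact zero_mem _
    rw [← LinearMap.ker_eq_bot, kr, this, Submodule.map_bot]
  · rw [rg]
    apply tr
    exact gr_min C.graug (fun i j => (p0 j).ne)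
  · rw [rg]
    apply tr
    exact gr_min (C.gr 0) p1
  · rw [rg]
    apply tr
    exact gr_min (C.gr 1) p2
  · rw [rg]
    apply tr
    exact gr_min (C.gr 2) p3

end final
end Bres


namespace Bres

lemma ideal_eq {k : Type*} [Field k] (a : ℕ) (ha : 1 ≤ a) (hc : Nat.Coprime a (2 * (a + 1))) :
    RingHom.ker (aeval (R := k) (gpi k a)).toRingHom = JF k a := by
  ext x
  rw [RingHom.mem_ker]
  exact ker_F a ha hc x

lemma cop_odd (g : ℕ) : Nat.Coprime (2 * g + 1) (2 * (2 * g + 1 + 1)) := by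
  apply Nat.Coprime.mul_right
  · simp
  · simp

end Bres

/-- For `h ≥ 2`, the defining ideal `I` of the projective closure of the
Bresinsky curve (realized as the kernel of `x₀ ↦ s^{n₄}`,
`x_i ↦ s^{n₄-n_i} t^{n_i}` in `R = k[x₀,…,x₄]`) has a minimal graded free
resolution `0 → R → R^{4h+3} → R^{8h+4} → R^{4h+3} → R → R/I → 0`: its Betti
numbers are `4h+3, 8h+4, 4h+3, 1`; in particular the Cohen–Macaulay type is
`1` while all Betti numbers grow unboundedly with `h`. -/
theorem bresinsky_projective_closure_resolution
    (k : Type*) [Field k] (h : ℕ) (hh : 2 ≤ h) :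
    letI n₁ : ℕ := (2 * h - 1) * (2 * h)
    letI n₂ : ℕ := (2 * h - 1) * (2 * h + 1)
    letI n₃ : ℕ := 2 * h * (2 * h + 1)
    letI n₄ : ℕ := 2 * h * (2 * h + 1) + 2 * h - 1
    letI s : MvPolynomial (Fin 2) k := X 0
    letI t : MvPolynomial (Fin 2) k := X 1
    letI I : Ideal (MvPolynomial (Fin 5) k) :=
      RingHom.ker (aeval (R := k)
        ![s ^ n₄, s ^ (n₄ - n₁) * t ^ n₁, s ^ (n₄ - n₂) * t ^ n₂,
          s ^ (n₄ - n₃) * t ^ n₃, t ^ n₄]).toRingHom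
    letI R := MvPolynomial (Fin 5) k
    letI m : Ideal (MvPolynomial (Fin 5) k) :=
      Ideal.span (Set.range (X : Fin 5 → MvPolynomial (Fin 5) k))
    ∃ (φ₁ : (Fin (4 * h + 3) → R) →ₗ[R] R)
      (φ₂ : (Fin (8 * h + 4) → R) →ₗ[R] (Fin (4 * h + 3) → R))
      (φ₃ : (Fin (4 * h + 3) → R) →ₗ[R] (Fin (8 * h + 4) → R))
      (φ₄ : R →ₗ[R] (Fin (4 * h + 3) → R)),
      LinearMap.range φ₁ = (I : Submodule (MvPolynomial (Fin 5) k) R) ∧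
      LinearMap.range φ₂ = LinearMap.ker φ₁ ∧
      LinearMap.range φ₃ = LinearMap.ker φ₂ ∧
      LinearMap.range φ₄ = LinearMap.ker φ₃ ∧
      Function.Injective φ₄ ∧
      LinearMap.range φ₁ ≤ m • (⊤ : Submodule R R) ∧
      LinearMap.range φ₂ ≤ m • (⊤ : Submodule R (Fin (4 * h + 3) → R)) ∧
      LinearMap.range φ₃ ≤ m • (⊤ : Submodule R (Fin (8 * h + 4) → R)) ∧
      LinearMap.range φ₄ ≤ m • (⊤ : Submodule R (Fin (4 * h + 3) → R)) := by
  obtain ⟨g, rfl⟩ : ∃ g, h = g + 1 := ⟨h - 1, by omega⟩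
  have hI := Bres.ideal_eq (k := k) (2 * g + 1) (by omega) (Bres.cop_odd g)
  have e1 : 2 * (g + 1) - 1 = 2 * g + 1 := by omega
  have e2 : 2 * (g + 1) = 2 * g + 1 + 1 := by omega
  have e3 : 2 * (g + 1) + 1 = 2 * g + 1 + 2 := by omega
  have n4 : 2 * (g + 1) * (2 * (g + 1) + 1) + 2 * (g + 1) - 1 =
      (2 * g + 1 + 1) * (2 * g + 1 + 2) + (2 * g + 1) := by
    rw [e3, e2]; omega
  have d1 : (2 * g + 1 + 1) * (2 * g + 1 + 2) + (2 * g + 1) - (2 * g + 1) * (2 * g + 1 + 1) =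
      3 * (2 * g + 1) + 2 := by
    apply Nat.sub_eq_of_eq_add; ring
  have d2 : (2 * g + 1 + 1) * (2 * g + 1 + 2) + (2 * g + 1) - (2 * g + 1) * (2 * g + 1 + 2) =
      2 * (2 * g + 1) + 2 := by
    apply Nat.sub_eq_of_eq_add; ring
  have d3 : (2 * g + 1 + 1) * (2 * g + 1 + 2) + (2 * g + 1) - (2 * g + 1 + 1) * (2 * g + 1 + 2) =
      2 * g + 1 := by
    apply Nat.sub_eq_of_eq_add; ring
  have r1 : 4 * (g + 1) + 3 = 2 * (2 * g + 1) + 2 + 3 := by ring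
  have r2 : 8 * (g + 1) + 4 = 2 * (2 * (2 * g + 1) + 2) + 4 := by ring
  simp only [n4, e1]
  simp only [e3]
  simp only [e2]
  simp only [d1, d2, d3]
  obtain ⟨C, hC, h0, h1, h2, h3, h4, p0, p1, p2, p3⟩ :=
    Bres.exists_res (k := k) (2 * g + 1) (by omega)
  have key := Bres.extract C (Bres.JF k (2 * g + 1)) hC _ _ _ (h0.trans r1.symm)
    (h1.trans r2.symm) (h2.trans r1.symm) h3 h4 p0 p1 p2 p3
  rw [← hI] at key
  exact key
end
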